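/- Let D be an unbounded c-John domain in ℝⁿ, n ≥ 2, and let τ, δ ∈ (0,1) and 1 ≤ p < n/δ be given. Then there is a constant C = C(δ, τ, p, n, c) > 0 such that the fractional Sobolev–Poincaré inequality inf_{a∈ℝ} ∫_D |u(x) − a|^{np/(n−δp)} dx ≤ C |u|_{W^{δ,p}_τ(D)}^{np/(n−δp)} holds for each u in the homogeneous fractional Sobolev space Ẇ^{δ,p}_τ(D). -/

import Mathlib

open MeasureTheory Metric Set
open scoped ENNReal NNReal BigOperators

noncomputable section

/-- Euclidean `n`-space. -/
abbrev Eucl (n : ℕ) : Type := EuclideanSpace ℝ (Fin n)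

/-- `D` is a `c`-John domain (bounded or unbounded): an open connected set such that each
pair of points can be joined by a rectifiable curve, parametrized by arc length
(formalized as a `1`-Lipschitz parametrization on `[0, ℓ]`), along which
`dist(γ t, ∂D) ≥ min{t, ℓ - t}/c`. -/
def IsJohnDomain (n : ℕ) (c : ℝ) (D : Set (Eucl n)) : Prop :=
  IsOpen D ∧ IsConnected D ∧
    ∀ x₁ ∈ D, ∀ x₂ ∈ D, ∃ ℓ : ℝ, 0 ≤ ℓ ∧ ∃ γ : ℝ → Eucl n,
      γ 0 = x₁ ∧ γ ℓ = x₂ ∧ (∀ t ∈ Icc (0:ℝ) ℓ, γ t ∈ D) ∧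
      LipschitzOnWith 1 γ (Icc 0 ℓ) ∧
      ∀ t ∈ Icc (0:ℝ) ℓ, min t (ℓ - t) / c ≤ infDist (γ t) (frontier D)

/-- The ball `B(x, τ·dist(x, ∂G))`; by convention, if `∂G = ∅` (i.e. `G = ℝⁿ`)
it is all of `ℝⁿ`. -/
def tauBall (n : ℕ) (τ : ℝ) (G : Set (Eucl n)) (x : Eucl n) : Set (Eucl n) :=
  {y : Eucl n | edist x y < ENNReal.ofReal τ * EMetric.infEdist x (frontier G)}

/-- The fractional kernel `|u x - u y|^p / |x - y|^(n + δp)` as an extended real. -/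
def fracKernel (n : ℕ) (δ p : ℝ) (u : Eucl n → ℝ) (x y : Eucl n) : ℝ≥0∞ :=
  ENNReal.ofReal (|u x - u y| ^ p / dist x y ^ ((n : ℝ) + δ * p))

/-- The `p`-th power of the seminorm `|u|_{W^{δ,p}_τ(G)}`. -/
def fracEnergyTau (n : ℕ) (δ τ p : ℝ) (G : Set (Eucl n)) (u : Eucl n → ℝ) : ℝ≥0∞ :=
  ∫⁻ x in G, ∫⁻ y in tauBall n τ G x, fracKernel n δ p u x y ∂volume ∂volume

/-- The `p`-th power of the seminorm `|u|_{W^{δ,p}(G)}`. -/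
def fracEnergy (n : ℕ) (δ p : ℝ) (G : Set (Eucl n)) (u : Eucl n → ℝ) : ℝ≥0∞ :=
  ∫⁻ x in G, ∫⁻ y in G, fracKernel n δ p u x y ∂volume ∂volume

/-- The fractional `(δ,p)`-capacity of a compact set `K ⊆ G`:
`inf |u|_{W^{δ,p}(G)}^p` over `u ∈ C₀(G)` with `u ≥ 1` on `K`. -/
def fracCap (n : ℕ) (δ p : ℝ) (K G : Set (Eucl n)) : ℝ≥0∞ :=
  ⨅ (u : Eucl n → ℝ) (_ : Continuous u) (_ : HasCompactSupport u) (_ : tsupport u ⊆ G)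
    (_ : ∀ x ∈ K, 1 ≤ u x), fracEnergy n δ p G u

/-- The fractional `(δ,q,p)`-Hardy inequality holds in `G` with constant `C`. -/
def HasFracHardy (n : ℕ) (δ p q C : ℝ) (G : Set (Eucl n)) : Prop :=
  ∀ u : Eucl n → ℝ, Continuous u → HasCompactSupport u → tsupport u ⊆ G →
    (∫⁻ x in G, ENNReal.ofReal
        (|u x| ^ q / infDist x (frontier G) ^ (q * (δ + n * (1/q - 1/p)))) ∂volume)
      ≤ ENNReal.ofReal C * fracEnergy n δ p G u ^ (q / p)

/-- The closed axis-parallel cube with center `z` and half side length `r`. -/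
def cube (n : ℕ) (z : Eucl n) (r : ℝ) : Set (Eucl n) :=
  {x : Eucl n | ∀ i, |x i - z i| ≤ r}

/-- The quantity `|Q|^(-1-δ/n) ∫_Q |u - u_Q|` for the cube `Q = cube n z r`. -/
def aTerm (n : ℕ) (δ : ℝ) (u : Eucl n → ℝ) (z : Eucl n) (r : ℝ) : ℝ :=
  ((volume (cube n z r)).toReal) ^ (-(1:ℝ) - δ / n) *
    ∫ x in cube n z r, |u x - ⨍ y in cube n z r, u y ∂volume| ∂volume

/-- The seminorm `|u|_{A^{δ,p}_κ(G)}`: the supremum, over families `𝒬` of pairwise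
disjoint cubes `Q` (given by center-halfside pairs) with `κQ ⊆ G`, of the `L^p(G)`
norm of `∑_{Q ∈ 𝒬} (|Q|^(-1-δ/n) ∫_Q |u - u_Q|) χ_Q`. -/
def ASeminorm (n : ℕ) (κ δ p : ℝ) (G : Set (Eucl n)) (u : Eucl n → ℝ) : ℝ≥0∞ :=
  ⨆ (𝒬 : Set (Eucl n × ℝ)) (_ : ∀ c ∈ 𝒬, 0 < c.2 ∧ cube n c.1 (κ * c.2) ⊆ G)
    (_ : ∀ c ∈ 𝒬, ∀ c' ∈ 𝒬, c ≠ c' → cube n c.1 c.2 ∩ cube n c'.1 c'.2 = ∅),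
    (∫⁻ x in G,
        (∑' c : 𝒬, (cube n (c : Eucl n × ℝ).1 (c : Eucl n × ℝ).2).indicator
          (fun _ => ENNReal.ofReal (aTerm n δ u (c : Eucl n × ℝ).1 (c : Eucl n × ℝ).2)) x) ^ p
      ∂volume) ^ (1 / p)

/-- `Q` is a closed dyadic cube in `ℝⁿ`. -/
def IsDyadicCube (n : ℕ) (Q : Set (Eucl n)) : Prop :=
  ∃ (k : ℤ) (z : Fin n → ℤ),
    Q = {x : Eucl n | ∀ i, (z i : ℝ) * (2:ℝ) ^ k ≤ x i ∧ x i ≤ ((z i : ℝ) + 1) * (2:ℝ) ^ k}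

/-- `W` is a Whitney decomposition of the proper open set `G`: a countable family of
closed dyadic cubes with pairwise disjoint interiors whose union is `G`, with
`diam Q ≤ dist(Q, ∂G) ≤ 4 diam Q` for each cube `Q ∈ W`. -/
def IsWhitneyDecomposition (n : ℕ) (G : Set (Eucl n)) (W : Set (Set (Eucl n))) : Prop :=
  W.Countable ∧ (∀ Q ∈ W, IsDyadicCube n Q) ∧ ⋃₀ W = G ∧
    (W.Pairwise fun Q R => interior Q ∩ interior R = ∅) ∧
    ∀ Q ∈ W, (∀ x ∈ Q, Metric.diam Q ≤ infDist x (frontier G)) ∧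
      ∃ x ∈ Q, infDist x (frontier G) ≤ 4 * Metric.diam Q

/-- `lam` is an upper Assouad-type covering exponent for `E`: there is `C > 0` such
that for every `x ∈ E` and all `0 < r < R < 2 diam E`, the set `E ∩ B(x,R)` can be
covered by at most `C (R/r)^lam` balls centered in `E` of radius `r`. -/
def UpperAssouadBound (n : ℕ) (E : Set (Eucl n)) (lam : ℝ) : Prop :=
  ∃ C : ℝ, 0 < C ∧ ∀ x ∈ E, ∀ r R : ℝ, 0 < r → r < R →
    ENNReal.ofReal R < 2 * EMetric.diam E →
    ∃ F : Finset (Eucl n), ↑F ⊆ E ∧ (F.card : ℝ) ≤ C * (R / r) ^ lam ∧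
      E ∩ ball x R ⊆ ⋃ y ∈ F, ball y r

/-- The upper Assouad dimension of `E`. -/
def upperAssouadDim (n : ℕ) (E : Set (Eucl n)) : ℝ :=
  sInf {lam : ℝ | 0 ≤ lam ∧ UpperAssouadBound n E lam}

/-- `lam` is a lower Assouad-type exponent for `E`: there is `C > 0` such that for
every `x ∈ E` and all `0 < r < R < 2 diam E`, at least `C (R/r)^lam` balls centered
in `E` of radius `r` are needed to cover `E ∩ B(x,R)`. -/
def LowerAssouadBound (n : ℕ) (E : Set (Eucl n)) (lam : ℝ) : Prop :=
  ∃ C : ℝ, 0 < C ∧ ∀ x ∈ E, ∀ r R : ℝ, 0 < r → r < R →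
    ENNReal.ofReal R < 2 * EMetric.diam E →
    ∀ F : Finset (Eucl n), ↑F ⊆ E → (E ∩ ball x R ⊆ ⋃ y ∈ F, ball y r) →
      C * (R / r) ^ lam ≤ (F.card : ℝ)

/-- The lower Assouad dimension of `E`. -/
def lowerAssouadDim (n : ℕ) (E : Set (Eucl n)) : ℝ :=
  sSup {lam : ℝ | 0 ≤ lam ∧ LowerAssouadBound n E lam}

end

/-!
For a threshold `T > 0`, Young's inequality `|v| ≤ T + T ^ (1 - p) * |v| ^ p` bounds the mean
difference of `u` over two neighbouring Whitney balls by `T` plus a multiple of the local energy.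
Summing along a chain of balls with geometrically growing radii, which the John condition
provides, shows that the values of `u` far from the boundary approach a constant `a`, at the rate
`r ^ (δ - n / p)` on balls of radius `r`. Along the chain from a point `x` down from radius `r`,
with thresholds decaying geometrically towards `x`, the same summation bounds `|u x - a|` by a
multiple of `t = e * r ^ (δ - n / p)`, where `e` is the seminorm of `u`, plus a function of `x`
whose integral is at most a multiple of `t * r ^ n`. Chebyshev's inequality and the choice of `r`
give the weak-type inequality at the exponent `q = n * p / (n - δ * p)`. Maz'ya's truncation
method upgrades it: applied to the dyadic truncations of `|u - a|`, whose energies sum to at most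
the energy of `u`, the weak-type inequality bounds each dyadic shell of `∫ |u - a| ^ q`.
-/

section MeanDistance

variable {β : Type*} [PseudoEMetricSpace β] [MeasurableSpace β]

/-- The mean distance between independent samples of `μ` and `ν`. On probability measures it is
symmetric and satisfies the triangle inequality, but it does not vanish on the diagonal. -/
noncomputable def meanEDist (μ ν : Measure β) : ℝ≥0∞ := ∫⁻ a, ∫⁻ b, edist a b ∂ν ∂μ

theorem meanEDist_map_le {γ : Type*} [PseudoEMetricSpace γ] [MeasurableSpace γ]
    [OpensMeasurableSpace γ] [SecondCountableTopology γ] {φ : β → γ} (hφ : LipschitzWith 1 φ)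
    (hφm : Measurable φ) (μ ν : Measure β) [SFinite ν] :
    meanEDist (μ.map φ) (ν.map φ) ≤ meanEDist μ ν := by
  rw [meanEDist, lintegral_map measurable_edist.lintegral_prod_right' hφm]
  refine lintegral_mono fun a => ?_
  rw [lintegral_map measurable_edist_right hφm]
  exact lintegral_mono fun b => by simpa using hφ a b

variable [OpensMeasurableSpace β]

theorem meanEDist_triangle (μ ν ξ : Measure β) [IsProbabilityMeasure μ] [IsProbabilityMeasure ν]
    [IsProbabilityMeasure ξ] : meanEDist μ ξ ≤ meanEDist μ ν + meanEDist ν ξ := by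
  have inner (a b : β) : ∫⁻ c, edist a c ∂ξ ≤ edist a b + ∫⁻ c, edist b c ∂ξ := by
    calc ∫⁻ c, edist a c ∂ξ ≤ ∫⁻ c, edist a b + edist b c ∂ξ :=
          lintegral_mono fun c => edist_triangle a b c
      _ = edist a b + ∫⁻ c, edist b c ∂ξ := by
          rw [lintegral_add_left measurable_const, lintegral_const, measure_univ, mul_one]
  have outer (a : β) : ∫⁻ c, edist a c ∂ξ ≤ (∫⁻ b, edist a b ∂ν) + meanEDist ν ξ := by
    calc ∫⁻ c, edist a c ∂ξ = ∫⁻ _, ∫⁻ c, edist a c ∂ξ ∂ν := by simp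
      _ ≤ ∫⁻ b, edist a b + ∫⁻ c, edist b c ∂ξ ∂ν := lintegral_mono fun b => inner a b
      _ = (∫⁻ b, edist a b ∂ν) + meanEDist ν ξ := lintegral_add_left measurable_edist_right _
  calc meanEDist μ ξ ≤ ∫⁻ a, (∫⁻ b, edist a b ∂ν) + meanEDist ν ξ ∂μ := lintegral_mono outer
    _ = meanEDist μ ν + meanEDist ν ξ := by
        rw [lintegral_add_right _ measurable_const, lintegral_const, measure_univ, mul_one]
        rfl

theorem meanEDist_le_sum_range (m : ℕ → Measure β) [∀ j, IsProbabilityMeasure (m j)] (J : ℕ) :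
    meanEDist (m 0) (m (J + 1)) ≤ ∑ j ∈ Finset.range (J + 1), meanEDist (m j) (m (j + 1)) := by
  induction J with
  | zero => simp
  | succ J ih =>
    rw [Finset.sum_range_succ]
    exact (meanEDist_triangle _ (m (J + 1)) _).trans (by gcongr)

variable [SecondCountableTopology β]

theorem meanEDist_comm (μ ν : Measure β) [SFinite μ] [SFinite ν] :
    meanEDist μ ν = meanEDist ν μ := by
  simp only [meanEDist]
  rw [lintegral_lintegral_swap measurable_edist.aemeasurable]
  simp only [edist_comm]

theorem meanEDist_dirac_left (a : β) (ν : Measure β) [SFinite ν] :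
    meanEDist (Measure.dirac a) ν = ∫⁻ b, edist a b ∂ν :=
  lintegral_dirac' a measurable_edist.lintegral_prod_right'

theorem meanEDist_dirac_dirac (a b : β) :
    meanEDist (Measure.dirac a) (Measure.dirac b) = edist a b := by
  rw [meanEDist_dirac_left, lintegral_dirac' b measurable_edist_right]

theorem edist_le_meanEDist_dirac_add (a b : β) (μ : Measure β) [IsProbabilityMeasure μ] :
    edist a b ≤ meanEDist μ (Measure.dirac a) + meanEDist μ (Measure.dirac b) := by
  rw [← meanEDist_dirac_dirac, meanEDist_comm μ (Measure.dirac a)]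
  exact meanEDist_triangle _ μ _

theorem exists_meanEDist_dirac_le (μ ν : Measure β) [IsProbabilityMeasure μ] [SFinite ν] :
    ∃ b, meanEDist ν (Measure.dirac b) ≤ meanEDist μ ν := by
  have hmeas : Measurable fun a => ∫⁻ b, edist a b ∂ν := measurable_edist.lintegral_prod_right'
  obtain ⟨b, hb⟩ := exists_le_lintegral (μ := μ) hmeas.aemeasurable
  exact ⟨b, (meanEDist_comm _ _).trans_le ((meanEDist_dirac_left b ν).trans_le hb)⟩

section Limit

variable {ι : Type*} {l : Filter ι} [l.NeBot] {m : ι → Measure β} [∀ i, IsProbabilityMeasure (m i)]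

theorem exists_eventually_meanEDist_dirac_le
    (hm : ∀ ε : ℝ≥0∞, 0 < ε → ∃ i₀, ∀ᶠ i in l, meanEDist (m i) (m i₀) ≤ ε) {ε : ℝ≥0∞}
    (hε : 0 < ε) : ∃ b, ∀ᶠ i in l, meanEDist (m i) (Measure.dirac b) ≤ ε := by
  obtain ⟨i₀, hi₀⟩ := hm (ε / 2) (ENNReal.half_pos hε.ne')
  obtain ⟨i₁, hi₁⟩ := hi₀.exists
  obtain ⟨b, hb⟩ := exists_meanEDist_dirac_le (m i₁) (m i₀)
  refine ⟨b, hi₀.mono fun i hi => ?_⟩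
  calc meanEDist (m i) (Measure.dirac b)
      ≤ meanEDist (m i) (m i₀) + meanEDist (m i₀) (Measure.dirac b) := meanEDist_triangle _ _ _
    _ ≤ ε / 2 + ε / 2 := add_le_add hi (hb.trans hi₁)
    _ = ε := ENNReal.add_halves ε

theorem exists_tendsto_meanEDist_dirac [CompleteSpace β]
    (hm : ∀ ε : ℝ≥0∞, 0 < ε → ∃ i₀, ∀ᶠ i in l, meanEDist (m i) (m i₀) ≤ ε) :
    ∃ a, Filter.Tendsto (fun i => meanEDist (m i) (Measure.dirac a)) l (nhds 0) := by
  choose b hb using fun k : ℕ =>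
    exists_eventually_meanEDist_dirac_le hm (ε := 1 / 2 ^ k) (by simp)
  have hdist (k : ℕ) : edist (b k) (b (k + 1)) ≤ 2 / 2 ^ k := by
    obtain ⟨i, hi, hi'⟩ := ((hb k).and (hb (k + 1))).exists
    calc edist (b k) (b (k + 1)) ≤ 1 / 2 ^ k + 1 / 2 ^ k := by
          refine (edist_le_meanEDist_dirac_add _ _ (m i)).trans (add_le_add hi (hi'.trans ?_))
          gcongr
          exacts [one_le_two, k.le_succ]
      _ = 2 / 2 ^ k := by rw [ENNReal.div_add_div_same, one_add_one_eq_two]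
  obtain ⟨a, ha⟩ := cauchySeq_tendsto_of_complete
    (cauchySeq_of_edist_le_geometric_two 2 ENNReal.ofNat_ne_top hdist)
  have hba (k : ℕ) := edist_le_of_edist_le_geometric_two_of_tendsto 2 hdist ha k
  have hsmall : Filter.Tendsto (fun k : ℕ => (1 + 2 * 2) / (2 : ℝ≥0∞) ^ k) Filter.atTop
      (nhds 0) := by
    simpa [div_eq_mul_inv, ENNReal.inv_pow] using ENNReal.Tendsto.const_mul
      (ENNReal.tendsto_pow_atTop_nhds_zero_of_lt_one ENNReal.one_half_lt_one)
      (Or.inr (by norm_num : (1 + 2 * 2 : ℝ≥0∞) ≠ ⊤))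
  refine ⟨a, ENNReal.tendsto_nhds_zero.2 fun ε hε => ?_⟩
  obtain ⟨k, hk⟩ := ((ENNReal.tendsto_nhds_zero.1 hsmall) ε hε).exists
  refine (hb k).mono fun i hi => ?_
  calc meanEDist (m i) (Measure.dirac a)
      ≤ meanEDist (m i) (Measure.dirac (b k))
        + meanEDist (Measure.dirac (b k)) (Measure.dirac a) := meanEDist_triangle _ _ _
    _ ≤ 1 / 2 ^ k + 2 * 2 / 2 ^ k := by
        rw [meanEDist_dirac_dirac]
        exact add_le_add hi (hba k)
    _ = (1 + 2 * 2) / 2 ^ k := ENNReal.div_add_div_same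
    _ ≤ ε := hk

end Limit

end MeanDistance

section Real

theorem le_add_rpow_mul_rpow {T a p : ℝ} (hT : 0 < T) (ha : 0 ≤ a) (hp : 1 ≤ p) :
    a ≤ T + T ^ (1 - p) * a ^ p := by
  rcases le_or_gt a T with hle | hlt
  · have : 0 ≤ T ^ (1 - p) * a ^ p := by positivity
    linarith
  · calc a = a ^ (1 - p) * a ^ p := by rw [← Real.rpow_add (hT.trans hlt)]; simp
      _ ≤ T ^ (1 - p) * a ^ p := by
          gcongr ?_ * _
          exact Real.rpow_le_rpow_of_nonpos hT hlt.le (by linarith)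
      _ ≤ T + T ^ (1 - p) * a ^ p := le_add_of_nonneg_left hT.le

theorem tsum_rpow_le_rpow_tsum {ι : Type*} (x : ι → ℝ≥0∞) {s : ℝ} (hs : 1 ≤ s) :
    ∑' i, x i ^ s ≤ (∑' i, x i) ^ s := by
  have split (y : ℝ≥0∞) : y ^ s = y * y ^ (s - 1) := by
    have := ENNReal.rpow_add_of_nonneg (x := y) 1 (s - 1) zero_le_one (sub_nonneg.2 hs)
    rwa [add_sub_cancel, ENNReal.rpow_one] at this
  calc ∑' i, x i ^ s ≤ ∑' i, x i * (∑' i, x i) ^ (s - 1) := by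
        refine ENNReal.tsum_le_tsum fun i => (split (x i)).trans_le ?_
        gcongr
        exact ENNReal.le_tsum i
    _ = (∑' i, x i) ^ s := by rw [ENNReal.tsum_mul_right, ← split]

/-- The nearest point projection of the line onto `[a, b]`, which truncates a function by
composition. -/
def clamp (a b y : ℝ) : ℝ := max a (min b y)

theorem lipschitzWith_clamp (a b : ℝ) : LipschitzWith 1 (clamp a b) :=
  (LipschitzWith.id.const_min b).const_max a

theorem edist_clamp {a b x y : ℝ} (hab : a ≤ b) (hxy : x ≤ y) :
    edist (clamp a b x) (clamp a b y) = volume (Ico a b ∩ Ico x y) := by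
  have habs : |clamp a b x - clamp a b y| = max (min b y - max a x) 0 := by
    simp only [clamp]
    grind
  rw [Ico_inter_Ico, Real.volume_Ico, edist_dist, Real.dist_eq, habs, ENNReal.ofReal_max]
  simp

theorem tsum_edist_clamp_le {s : ℤ → ℝ} (hs : Monotone s) (x y : ℝ) :
    ∑' k, edist (clamp (s k) (s (k + 1)) x) (clamp (s k) (s (k + 1)) y) ≤ edist x y := by
  wlog hxy : x ≤ y generalizing x y
  · simpa only [edist_comm] using this y x (le_of_not_ge hxy)
  have hdisj : Pairwise (Function.onFun Disjoint fun k => Ico (s k) (s (k + 1)) ∩ Ico x y) :=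
    fun i j hij => (hs.pairwise_disjoint_on_Ico_succ hij).mono inter_subset_left inter_subset_left
  calc ∑' k, edist (clamp (s k) (s (k + 1)) x) (clamp (s k) (s (k + 1)) y)
      = ∑' k, volume (Ico (s k) (s (k + 1)) ∩ Ico x y) :=
        tsum_congr fun k => edist_clamp (hs (Order.le_succ k)) hxy
    _ ≤ volume (⋃ k, Ico (s k) (s (k + 1)) ∩ Ico x y) :=
        tsum_meas_le_meas_iUnion_of_disjoint volume
          (fun _ => measurableSet_Ico.inter measurableSet_Ico) hdisj
    _ ≤ volume (Ico x y) := measure_mono (iUnion_subset fun _ => inter_subset_right)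
    _ = edist x y := by
        rw [Real.volume_Ico, edist_comm, edist_dist, Real.dist_eq, abs_of_nonneg (sub_nonneg.2 hxy)]

/-- Chebyshev's inequality on each dyadic shell. -/
theorem lintegral_abs_rpow_le_tsum {X : Type*} [MeasurableSpace X] {μ : Measure X} {f : X → ℝ}
    (hf : Measurable f) {q : ℝ} (hq : 0 < q) :
    ∫⁻ x, ENNReal.ofReal (|f x| ^ q) ∂μ
      ≤ ∑' k : ℤ, ENNReal.ofReal ((2 ^ (k + 1)) ^ q) * μ {x | 2 ^ k ≤ |f x|} := by
  have hmeas (k : ℤ) : MeasurableSet {x | (2 : ℝ) ^ k ≤ |f x|} :=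
    measurableSet_le measurable_const (measurable_norm.comp hf)
  have pointwise (x : X) : ENNReal.ofReal (|f x| ^ q) ≤ ∑' k : ℤ,
      {x | (2 : ℝ) ^ k ≤ |f x|}.indicator (fun _ => ENNReal.ofReal ((2 ^ (k + 1)) ^ q)) x := by
    rcases (abs_nonneg (f x)).eq_or_lt with hzero | hpos
    · simp [← hzero, Real.zero_rpow hq.ne']
    obtain ⟨k, hk⟩ := exists_mem_Ico_zpow hpos one_lt_two
    refine le_trans ?_ (ENNReal.le_tsum k)
    rw [indicator_of_mem (show x ∈ {x | (2 : ℝ) ^ k ≤ |f x|} from hk.1)]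
    gcongr
    exact hk.2.le
  calc _ ≤ ∫⁻ x, ∑' k : ℤ, {x | (2 : ℝ) ^ k ≤ |f x|}.indicator
          (fun _ => ENNReal.ofReal ((2 ^ (k + 1)) ^ q)) x ∂μ := lintegral_mono pointwise
    _ = _ := by
        rw [lintegral_tsum fun k => (measurable_const.indicator (hmeas k)).aemeasurable]
        simp only [lintegral_indicator_const (hmeas _)]

end Real

section Ball

variable {E : Type*} [PseudoMetricSpace E] [MeasurableSpace E] [OpensMeasurableSpace E]
  {g : E → ℝ≥0∞}

theorem setLIntegral_inter_ball (μ : Measure E) (s : Set E) (x : E) (r : ℝ) :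
    ∫⁻ y in s ∩ ball x r, g y ∂μ = ∫⁻ y in s, (ball x r).indicator g y ∂μ := by
  rw [lintegral_indicator measurableSet_ball, Measure.restrict_restrict measurableSet_ball,
    inter_comm]

variable [SecondCountableTopology E]

theorem measurable_indicator_ball (hg : Measurable g) (r : ℝ) :
    Measurable fun q : E × E => (ball q.1 r).indicator g q.2 :=
  (hg.comp measurable_snd).indicator
    (measurableSet_lt (measurable_snd.dist measurable_fst) measurable_const)

theorem measurable_setLIntegral_inter_ball (μ : Measure E) [SFinite μ] (s : Set E)
    (hg : Measurable g) (r : ℝ) : Measurable fun x => ∫⁻ y in s ∩ ball x r, g y ∂μ := by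
  simp only [setLIntegral_inter_ball]
  exact (measurable_indicator_ball hg r).lintegral_prod_right'

end Ball

theorem lintegral_setLIntegral_inter_ball_le {E : Type*} [NormedAddCommGroup E] [MeasurableSpace E]
    [BorelSpace E] [SecondCountableTopology E] (μ : Measure E) [SFinite μ] [μ.IsAddHaarMeasure]
    (s : Set E) {g : E → ℝ≥0∞} (hg : Measurable g) (r : ℝ) :
    ∫⁻ x in s, ∫⁻ y in s ∩ ball x r, g y ∂μ ∂μ ≤ μ (ball 0 r) * ∫⁻ y in s, g y ∂μ := by
  have swap_ball (x y : E) : (ball x r).indicator g y = (ball y r).indicator (fun _ => g y) x := by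
    classical
    rw [indicator_apply, indicator_apply, if_congr mem_ball_comm rfl rfl]
  calc ∫⁻ x in s, ∫⁻ y in s ∩ ball x r, g y ∂μ ∂μ
      = ∫⁻ y in s, ∫⁻ x in s, (ball x r).indicator g y ∂μ ∂μ := by
        simp only [setLIntegral_inter_ball]
        exact lintegral_lintegral_swap (measurable_indicator_ball hg r).aemeasurable
    _ ≤ ∫⁻ y in s, g y * μ (ball 0 r) ∂μ := by
        refine lintegral_mono fun y => (setLIntegral_le_lintegral _ _).trans_eq ?_
        simp only [swap_ball, lintegral_indicator_const measurableSet_ball,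
          μ.addHaar_ball_center]
    _ = μ (ball 0 r) * ∫⁻ y in s, g y ∂μ := by
        rw [lintegral_mul_const _ hg, mul_comm]

section Geometry

variable {n : ℕ} {c κ τ ρ ρ' : ℝ} {D : Set (Eucl n)} {x y z z' : Eucl n}

theorem infDist_frontier_pos (hD : IsOpen D) (hne : (frontier D).Nonempty) (hx : x ∈ D) :
    0 < infDist x (frontier D) := by
  refine (isClosed_frontier.notMem_iff_infDist_pos hne).1 fun hfr => ?_
  exact (hD.frontier_eq ▸ hfr).2 hx

theorem ball_subset_of_le_infDist_frontier (hD : IsOpen D) (hx : x ∈ D)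
    (hρ : ρ ≤ infDist x (frontier D)) : ball x ρ ⊆ D := by
  rcases le_or_gt ρ 0 with hρ0 | hρ0
  · simp [ball_eq_empty.2 hρ0]
  refine (convex_ball x ρ).isPreconnected.subset_of_closure_inter_subset hD
    ⟨x, mem_ball_self hρ0, hx⟩ ?_
  rintro y ⟨hy, hyx⟩
  by_contra hyD
  have hyfr : y ∈ frontier D := hD.frontier_eq ▸ ⟨hy, hyD⟩
  exact (mem_ball'.1 hyx).not_ge (hρ.trans (infDist_le_dist_of_mem hyfr))

theorem mem_tauBall_iff (hne : (frontier D).Nonempty) (hτ : 0 ≤ τ) :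
    y ∈ tauBall n τ D x ↔ dist x y < τ * infDist x (frontier D) := by
  have hinf : infEDist x (frontier D) = ENNReal.ofReal (infDist x (frontier D)) :=
    (ENNReal.ofReal_toReal (infEDist_ne_top hne)).symm
  change edist x y < ENNReal.ofReal τ * infEDist x (frontier D) ↔ _
  rw [hinf, ← ENNReal.ofReal_mul hτ, edist_dist, ENNReal.ofReal_lt_ofReal_iff_of_nonneg dist_nonneg]

/-- A ball that is small compared with the distance of its center to the boundary. The constant `6`
leaves room for neighbouring balls; see `AdjacentBalls`. -/
structure IsWhitneyBall (τ : ℝ) (D : Set (Eucl n)) (z : Eucl n) (ρ : ℝ) : Prop where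
  center_mem : z ∈ D
  radius_pos : 0 < ρ
  six_mul_radius_le : 6 * ρ ≤ min τ 1 * infDist z (frontier D)

theorem IsWhitneyBall.ball_subset (hD : IsOpen D) (h : IsWhitneyBall τ D z ρ) : ball z ρ ⊆ D := by
  refine ball_subset_of_le_infDist_frontier hD h.center_mem ?_
  have hd : 0 ≤ infDist z (frontier D) := infDist_nonneg
  nlinarith [h.six_mul_radius_le, h.radius_pos, min_le_right τ 1]

theorem IsWhitneyBall.min_pos (h : IsWhitneyBall τ D z ρ) : 0 < min τ 1 :=
  pos_of_mul_pos_left ((mul_pos (by norm_num) h.radius_pos).trans_le h.six_mul_radius_le)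
    infDist_nonneg

theorem IsWhitneyBall.five_mul_radius_le (h : IsWhitneyBall τ D z ρ) (hy : y ∈ ball z ρ) :
    5 * ρ ≤ τ * infDist y (frontier D) := by
  have hdist : infDist z (frontier D) ≤ infDist y (frontier D) + ρ :=
    infDist_le_infDist_add_dist.trans (add_le_add_right (mem_ball'.1 hy).le _)
  have hd : 0 ≤ infDist y (frontier D) := infDist_nonneg
  have hmin := h.min_pos
  nlinarith [h.six_mul_radius_le, h.radius_pos, min_le_left τ 1, min_le_right τ 1]

/-- Two Whitney balls of comparable size and position, so that the values of a function on one
are controlled by the local energy at the points of the other. -/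
structure AdjacentBalls (τ : ℝ) (D : Set (Eucl n)) (z : Eucl n) (ρ : ℝ) (z' : Eucl n) (ρ' : ℝ) :
    Prop where
  left : IsWhitneyBall τ D z ρ
  right : IsWhitneyBall τ D z' ρ'
  dist_le_left : dist z z' ≤ ρ
  dist_le_right : dist z z' ≤ ρ'
  left_le : ρ ≤ 3 * ρ'
  right_le : ρ' ≤ 3 * ρ

namespace AdjacentBalls

theorem symm (h : AdjacentBalls τ D z ρ z' ρ') : AdjacentBalls τ D z' ρ' z ρ :=
  ⟨h.right, h.left, dist_comm z z' ▸ h.dist_le_right, dist_comm z z' ▸ h.dist_le_left,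
    h.right_le, h.left_le⟩

theorem dist_lt_add (h : AdjacentBalls τ D z ρ z' ρ') {y' : Eucl n} (hy : y ∈ ball z ρ)
    (hy' : y' ∈ ball z' ρ') : dist y y' < ρ + min ρ ρ' + ρ' := by
  have hmid := le_min h.dist_le_left h.dist_le_right
  have := dist_triangle4 y z z' y'
  linarith [mem_ball.1 hy, mem_ball'.1 hy']

theorem ball_subset_tauBall (h : AdjacentBalls τ D z ρ z' ρ') (hne : (frontier D).Nonempty)
    (hy : y ∈ ball z ρ) : ball z' ρ' ⊆ tauBall n τ D y := fun y' hy' => by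
  rw [mem_tauBall_iff hne (h.left.min_pos.le.trans (min_le_left τ 1))]
  linarith [h.dist_lt_add hy hy', min_le_left ρ ρ', h.right_le, h.left.five_mul_radius_le hy]

theorem ball_subset_closedBall (h : AdjacentBalls τ D z ρ z' ρ') (hy : y ∈ ball z ρ) :
    ball z' ρ' ⊆ closedBall y (5 * ρ') := fun y' hy' => by
  rw [mem_closedBall']
  linarith [h.dist_lt_add hy hy', min_le_right ρ ρ', h.left_le]

end AdjacentBalls

theorem IsWhitneyBall.adjacentBalls_self (h : IsWhitneyBall τ D z ρ) : AdjacentBalls τ D z ρ z ρ :=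
  ⟨h, h, by simpa using h.radius_pos.le, by simpa using h.radius_pos.le,
    by linarith [h.radius_pos], by linarith [h.radius_pos]⟩

/-- A curve from `x` that recedes linearly from the boundary, parametrized by the radius `ρ ≤ S` of
a Whitney ball centered on it. It rests at `x` until the ball there has reached its full size. -/
structure IsCarrot (κ τ : ℝ) (D : Set (Eucl n)) (x : Eucl n) (S : ℝ) (z : ℝ → Eucl n) : Prop where
  isWhitneyBall : ∀ ρ ∈ Ioc 0 S, IsWhitneyBall τ D (z ρ) ρ
  mul_dist_le : ∀ ρ ∈ Icc 0 S, ∀ ρ' ∈ Icc 0 S, κ * dist (z ρ) (z ρ') ≤ |ρ - ρ'|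
  eq_start : ∀ ρ ≤ κ * infDist x (frontier D), z ρ = x
  le_end : κ * infDist x (frontier D) ≤ S

theorem IsCarrot.adjacentBalls {S : ℝ} {z : ℝ → Eucl n} (h : IsCarrot κ τ D x S z) (hκ : 0 < κ)
    (hκ1 : κ ≤ 1) (hρ : 0 < ρ) (hle : ρ ≤ ρ') (hle' : ρ' ≤ (1 + κ) * ρ) (hS : ρ' ≤ S) :
    AdjacentBalls τ D (z ρ) ρ (z ρ') ρ' := by
  have hdist : dist (z ρ) (z ρ') ≤ ρ := by
    have := h.mul_dist_le ρ ⟨hρ.le, hle.trans hS⟩ ρ' ⟨hρ.le.trans hle, hS⟩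
    rw [abs_sub_comm, abs_of_nonneg (sub_nonneg.2 hle)] at this
    exact le_of_mul_le_mul_left (this.trans (by linarith)) hκ
  have hbig : κ * ρ ≤ ρ := mul_le_of_le_one_left hρ.le hκ1
  exact ⟨h.isWhitneyBall ρ ⟨hρ, hle.trans hS⟩, h.isWhitneyBall ρ' ⟨hρ.trans_le hle, hS⟩, hdist,
    hdist.trans hle, by linarith, by linarith⟩

theorem IsCarrot.ball_subset {S : ℝ} {z : ℝ → Eucl n} (h : IsCarrot κ τ D x S z) (hκ : 0 < κ)
    (hρ : ρ ∈ Ioc 0 S) : ball (z ρ) ρ ⊆ ball x ((1 + κ⁻¹) * ρ) := by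
  have hdist : dist (z ρ) x ≤ κ⁻¹ * ρ := by
    rw [← h.eq_start 0 (mul_nonneg hκ.le infDist_nonneg), ← div_eq_inv_mul, le_div_iff₀' hκ]
    simpa [abs_of_pos hρ.1] using
      h.mul_dist_le ρ (Ioc_subset_Icc_self hρ) 0 ⟨le_rfl, hρ.1.le.trans hρ.2⟩
  exact ball_subset_ball' (by linarith)

/-- The geometric content of being an unbounded John domain: any two points are joined by a pair of
carrots of comparable size, and there are points arbitrarily far from the boundary. -/
structure IsCarrotDomain (κ τ : ℝ) (D : Set (Eucl n)) : Prop where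
  ratio_pos : 0 < κ
  ratio_le_one : κ ≤ 1
  isOpen : IsOpen D
  frontier_nonempty : (frontier D).Nonempty
  exists_le_infDist : ∀ R : ℝ, ∃ w ∈ D, R ≤ infDist w (frontier D)
  exists_carrots : ∀ x ∈ D, ∀ w ∈ D, ∃ S S' z z', IsCarrot κ τ D x S z ∧ IsCarrot κ τ D w S' z' ∧
    z S = z' S' ∧ S ≤ 3 * S' ∧ S' ≤ 3 * S

section John

/-- The ratio of ball radius to length along the carrots of a `c`-John domain. -/
noncomputable def carrotRatio (c τ : ℝ) : ℝ := min τ 1 / (6 * (1 + 2 * c))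

theorem carrotRatio_pos (hc : 0 < c) (hτ : 0 < τ) : 0 < carrotRatio c τ := by
  have : 0 < min τ 1 := lt_min hτ one_pos
  unfold carrotRatio
  positivity

theorem carrotRatio_le_one (hc : 0 < c) : carrotRatio c τ ≤ 1 := by
  rw [carrotRatio, div_le_one (by positivity)]
  linarith [min_le_right τ 1]

theorem isWhitneyBall_of_div_le_infDist (hc : 0 < c) (hτ : 0 < τ) {t : ℝ} (hz : z ∈ D)
    (hρ : 0 < ρ) (hρt : ρ / carrotRatio c τ ≤ infDist x (frontier D) + t) (hxz : dist x z ≤ t)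
    (ht : t / c ≤ infDist z (frontier D)) : IsWhitneyBall τ D z ρ := by
  have hκ := carrotRatio_pos hc hτ
  have hx : infDist x (frontier D) ≤ infDist z (frontier D) + t :=
    infDist_le_infDist_add_dist.trans (add_le_add_right hxz _)
  rw [div_le_iff₀ hc] at ht
  refine ⟨hz, hρ, ?_⟩
  calc 6 * ρ ≤ 6 * (infDist z (frontier D) * (1 + 2 * c) * carrotRatio c τ) := by
        gcongr
        exact (div_le_iff₀ hκ).1 (by linarith)
    _ = min τ 1 * infDist z (frontier D) := by
        rw [carrotRatio]
        field_simp

/-- The position at radius `ρ` is reached after length `ρ / κ - dist(x, ∂D)`, where `κ` is the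
`carrotRatio`. -/
theorem isCarrot_of_lipschitzOnWith (hc : 0 < c) (hτ : 0 < τ) {ℓ : ℝ} (hℓ : 0 ≤ ℓ)
    {γ : ℝ → Eucl n} (hmem : ∀ t ∈ Icc 0 ℓ, γ t ∈ D) (hlip : LipschitzOnWith 1 γ (Icc 0 ℓ))
    (hdist : ∀ t ∈ Icc 0 ℓ, t / c ≤ infDist (γ t) (frontier D)) :
    IsCarrot (carrotRatio c τ) τ D (γ 0) (carrotRatio c τ * (infDist (γ 0) (frontier D) + ℓ))
      (fun ρ => γ (max (ρ / carrotRatio c τ - infDist (γ 0) (frontier D)) 0)) := by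
  have hκ : 0 < carrotRatio c τ := carrotRatio_pos hc hτ
  set κ := carrotRatio c τ
  set d := infDist (γ 0) (frontier D)
  have length_mem {ρ : ℝ} (hρ : ρ ≤ κ * (d + ℓ)) : max (ρ / κ - d) 0 ∈ Icc 0 ℓ :=
    ⟨le_max_right _ _, max_le (by linarith [(div_le_iff₀' hκ).2 hρ]) hℓ⟩
  refine ⟨fun ρ hρ => ?_, fun ρ hρ ρ' hρ' => ?_, fun ρ hρ => ?_, by gcongr; linarith⟩
  · have ht := length_mem hρ.2
    refine isWhitneyBall_of_div_le_infDist (x := γ 0) hc hτ (hmem _ ht) hρ.1 ?_ ?_ (hdist _ ht)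
    · linarith [le_max_left (ρ / κ - d) 0]
    · simpa [Real.dist_eq, abs_of_nonneg ht.1] using hlip.dist_le_mul 0 ⟨le_rfl, hℓ⟩ _ ht
  · calc κ * dist (γ (max (ρ / κ - d) 0)) (γ (max (ρ' / κ - d) 0))
        ≤ κ * |max (ρ / κ - d) 0 - max (ρ' / κ - d) 0| := by
          gcongr
          simpa [Real.dist_eq] using
            hlip.dist_le_mul _ (length_mem hρ.2) _ (length_mem hρ'.2)
      _ ≤ κ * |(ρ - ρ') / κ| := by
          refine mul_le_mul_of_nonneg_left ?_ hκ.le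
          simpa [sub_div] using abs_max_sub_max_le_abs (ρ / κ - d) (ρ' / κ - d) 0
      _ = |ρ - ρ'| := by rw [abs_div, abs_of_pos hκ, mul_div_cancel₀ _ hκ.ne']
  · have : ρ / κ - d ≤ 0 := by linarith [(div_le_iff₀' hκ).2 hρ]
    simp only [max_eq_right this]

end John

end Geometry

namespace IsJohnDomain

variable {n : ℕ} {c τ : ℝ} {D : Set (Eucl n)}

theorem exists_carrots (hD : IsJohnDomain n c D) (hc : 0 < c) (hτ : 0 < τ) {x w : Eucl n}
    (hx : x ∈ D) (hw : w ∈ D) :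
    ∃ S S' z z', IsCarrot (carrotRatio c τ) τ D x S z ∧ IsCarrot (carrotRatio c τ) τ D w S' z' ∧
      z S = z' S' ∧ S ≤ 3 * S' ∧ S' ≤ 3 * S := by
  obtain ⟨ℓ, hℓ, γ, rfl, rfl, hmem, hlip, hdist⟩ := hD.2.2 x hx w hw
  have hκ := carrotRatio_pos hc hτ
  have hhalf : 0 ≤ ℓ / 2 := by positivity
  have forth {t : ℝ} (ht : t ∈ Icc 0 (ℓ / 2)) : t ∈ Icc 0 ℓ := ⟨ht.1, by linarith [ht.2]⟩
  have back {t : ℝ} (ht : t ∈ Icc 0 (ℓ / 2)) : ℓ - t ∈ Icc 0 ℓ :=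
    ⟨by linarith [ht.2], by linarith [ht.1]⟩
  have hlip_back : LipschitzOnWith 1 (fun t => γ (ℓ - t)) (Icc 0 (ℓ / 2)) :=
    LipschitzOnWith.of_dist_le_mul fun t ht s hs =>
      dist_sub_left ℓ t s ▸ hlip.dist_le_mul _ (back ht) _ (back hs)
  have carrot := isCarrot_of_lipschitzOnWith hc hτ hhalf (fun t ht => hmem t (forth ht))
    (hlip.mono fun t ht => forth ht) fun t ht => by
      simpa only [min_eq_left (show t ≤ ℓ - t by linarith [ht.2])] using hdist t (forth ht)
  have carrot_back := isCarrot_of_lipschitzOnWith hc hτ hhalf (fun t ht => hmem _ (back ht))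
    hlip_back fun t ht => by
      simpa [min_eq_right (show t ≤ ℓ - t by linarith [ht.2])] using hdist _ (back ht)
  simp only [sub_zero] at carrot_back
  have hends : dist (γ 0) (γ ℓ) ≤ ℓ := by
    simpa [Real.dist_eq, abs_of_nonneg hℓ] using
      hlip.dist_le_mul 0 ⟨le_rfl, hℓ⟩ ℓ ⟨hℓ, le_rfl⟩
  have comparable {x y : Eucl n} (hxy : dist x y ≤ ℓ) :
      carrotRatio c τ * (infDist x (frontier D) + ℓ / 2)
        ≤ 3 * (carrotRatio c τ * (infDist y (frontier D) + ℓ / 2)) := by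
    have hle : infDist x (frontier D) ≤ infDist y (frontier D) + dist x y :=
      infDist_le_infDist_add_dist
    have hy : 0 ≤ infDist y (frontier D) := infDist_nonneg
    rw [mul_left_comm]
    gcongr
    linarith
  refine ⟨_, _, _, _, carrot, carrot_back, ?_, comparable hends,
    comparable ((dist_comm _ _).trans_le hends)⟩
  simp only [mul_div_cancel_left₀ _ hκ.ne', add_sub_cancel_left, max_eq_left hhalf, sub_half]

theorem frontier_nonempty (hD : IsJohnDomain n c D) (hc : 0 < c) (hb : ¬Bornology.IsBounded D) :
    (frontier D).Nonempty := by
  by_contra hfr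
  rw [not_nonempty_iff_eq_empty] at hfr
  refine hb (Subsingleton.finite (fun x hx y hy => ?_)).isBounded
  obtain ⟨ℓ, hℓ, γ, rfl, rfl, -, -, hdist⟩ := hD.2.2 x hx y hy
  have hmid := hdist (ℓ / 2) ⟨by linarith, by linarith⟩
  rw [hfr, infDist_empty, sub_half, min_self, div_le_iff₀ hc] at hmid
  rw [show ℓ = 0 by linarith]

theorem exists_le_infDist (hD : IsJohnDomain n c D) (hc : 0 < c) (hb : ¬Bornology.IsBounded D)
    (R : ℝ) : ∃ w ∈ D, R ≤ infDist w (frontier D) := by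
  obtain ⟨x, hx⟩ := hD.2.1.nonempty
  obtain ⟨w, hw, hxw⟩ : ∃ w ∈ D, 2 * (c * R) < dist x w := by
    by_contra! hball
    exact hb (isBounded_closedBall.subset fun w hw => mem_closedBall'.2 (hball w hw))
  obtain ⟨ℓ, hℓ, γ, rfl, rfl, hmem, hlip, hdist⟩ := hD.2.2 x hx w hw
  have hends : dist (γ 0) (γ ℓ) ≤ ℓ := by
    simpa [Real.dist_eq, abs_of_nonneg hℓ] using
      hlip.dist_le_mul 0 ⟨le_rfl, hℓ⟩ ℓ ⟨hℓ, le_rfl⟩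
  have hmid : ℓ / 2 ∈ Icc 0 ℓ := ⟨by linarith, by linarith⟩
  refine ⟨γ (ℓ / 2), hmem _ hmid, le_trans ?_ (hdist _ hmid)⟩
  rw [sub_half, min_self, le_div_iff₀' hc]
  linarith

theorem isCarrotDomain (hD : IsJohnDomain n c D) (hc : 0 < c) (hτ : 0 < τ)
    (hb : ¬Bornology.IsBounded D) : IsCarrotDomain (carrotRatio c τ) τ D where
  ratio_pos := carrotRatio_pos hc hτ
  ratio_le_one := carrotRatio_le_one hc
  isOpen := hD.1
  frontier_nonempty := hD.frontier_nonempty hc hb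
  exists_le_infDist := hD.exists_le_infDist hc hb
  exists_carrots _ hx _ hw := hD.exists_carrots hc hτ hx hw

end IsJohnDomain

section LocalEnergy

variable {n : ℕ} {δ τ p : ℝ} {D : Set (Eucl n)} {u : Eucl n → ℝ} {y z z' : Eucl n} {ρ ρ' T : ℝ}

/-- The distribution of the values of `u` at a uniformly random point of the ball. -/
noncomputable def ballLaw (u : Eucl n → ℝ) (z : Eucl n) (ρ : ℝ) : Measure ℝ :=
  (ProbabilityTheory.cond volume (ball z ρ)).map u

theorem isProbabilityMeasure_ballLaw (hu : Measurable u) (hρ : 0 < ρ) :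
    IsProbabilityMeasure (ballLaw u z ρ) := by
  have := ProbabilityTheory.cond_isProbabilityMeasure_of_finite
    (measure_ball_pos volume z hρ).ne' measure_ball_lt_top.ne
  exact Measure.isProbabilityMeasure_map hu.aemeasurable

theorem lintegral_ballLaw (hu : Measurable u) {f : ℝ → ℝ≥0∞} (hf : Measurable f) :
    ∫⁻ a, f a ∂ballLaw u z ρ = (volume (ball z ρ))⁻¹ * ∫⁻ y in ball z ρ, f (u y) := by
  rw [ballLaw, lintegral_map hf hu, ProbabilityTheory.cond, lintegral_smul_measure, smul_eq_mul]

theorem volume_ball_eq_ofReal (z : Eucl n) (hρ : 0 < ρ) :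
    volume (ball z ρ) = ENNReal.ofReal (volume.real (ball (0 : Eucl n) 1) * ρ ^ (n : ℝ)) := by
  rw [Measure.addHaar_ball_of_pos volume z hρ, mul_comm, ENNReal.ofReal_mul measureReal_nonneg,
    measureReal_def, ENNReal.ofReal_toReal measure_ball_lt_top.ne, finrank_euclideanSpace_fin,
    Real.rpow_natCast]

theorem volume_real_unitBall_pos (n : ℕ) : 0 < volume.real (ball (0 : Eucl n) 1) :=
  ENNReal.toReal_pos (measure_ball_pos volume _ one_pos).ne' measure_ball_lt_top.ne

/-- The density of the energy `fracEnergyTau` at `y`. -/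
noncomputable def localEnergy (n : ℕ) (δ τ p : ℝ) (D : Set (Eucl n)) (u : Eucl n → ℝ)
    (y : Eucl n) : ℝ≥0∞ :=
  ∫⁻ z in tauBall n τ D y, fracKernel n δ p u y z

theorem fracEnergyTau_eq_lintegral_localEnergy :
    fracEnergyTau n δ τ p D u = ∫⁻ y in D, localEnergy n δ τ p D u y := rfl

theorem measurable_fracKernel (hu : Measurable u) :
    Measurable fun q : Eucl n × Eucl n => fracKernel n δ p u q.1 q.2 := by
  unfold fracKernel
  have hdiff : Measurable fun q : Eucl n × Eucl n => |u q.1 - u q.2| :=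
    measurable_norm.comp ((hu.comp measurable_fst).sub (hu.comp measurable_snd))
  exact ((hdiff.pow_const p).div (measurable_dist.pow_const _)).ennreal_ofReal

theorem measurableSet_tauBall_graph :
    MeasurableSet {q : Eucl n × Eucl n | q.2 ∈ tauBall n τ D q.1} :=
  measurableSet_lt measurable_edist ((measurable_infEDist.comp measurable_fst).const_mul _)

theorem measurable_localEnergy (hu : Measurable u) : Measurable (localEnergy n δ τ p D u) := by
  have hind := ((measurable_fracKernel (δ := δ) (p := p) hu).indicator
    (measurableSet_tauBall_graph (τ := τ) (D := D))).lintegral_prod_right' (ν := volume)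
  convert hind using 1
  funext y
  have hslice : MeasurableSet (tauBall n τ D y) :=
    measurable_prodMk_left (x := y) measurableSet_tauBall_graph
  exact (lintegral_indicator hslice _).symm

theorem edist_le_ofReal_add_mul_fracKernel (hp : 1 ≤ p) (hδp : 0 ≤ n + δ * p) (hT : 0 < T) {L : ℝ}
    (hL : dist y z ≤ L) :
    edist (u y) (u z) ≤ ENNReal.ofReal T
      + ENNReal.ofReal (T ^ (1 - p) * L ^ (n + δ * p)) * fracKernel n δ p u y z := by
  have hL0 : 0 ≤ L := dist_nonneg.trans hL
  have hkernel : 0 ≤ |u y - u z| ^ p / dist y z ^ (n + δ * p) := by positivity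
  rw [fracKernel, ← ENNReal.ofReal_mul (by positivity), ← ENNReal.ofReal_add hT.le (by positivity),
    edist_dist, Real.dist_eq]
  refine ENNReal.ofReal_le_ofReal ?_
  rcases eq_or_ne y z with rfl | hyz
  · simpa using add_nonneg hT.le (mul_nonneg (by positivity) hkernel)
  have hdist : 0 < dist y z ^ (n + δ * p) := Real.rpow_pos_of_pos (dist_pos.2 hyz) _
  calc |u y - u z| ≤ T + T ^ (1 - p) * |u y - u z| ^ p :=
        le_add_rpow_mul_rpow hT (abs_nonneg _) hp
    _ = T + T ^ (1 - p) * dist y z ^ (n + δ * p) * (|u y - u z| ^ p / dist y z ^ (n + δ * p)) := by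
        rw [mul_assoc, mul_div_cancel₀ _ hdist.ne']
    _ ≤ T + T ^ (1 - p) * L ^ (n + δ * p) * (|u y - u z| ^ p / dist y z ^ (n + δ * p)) := by
        gcongr

/-- The constant in `meanEDist_dirac_ballLaw_le`. -/
noncomputable def pointEnergyConst (n : ℕ) (δ p : ℝ) : ℝ :=
  5 ^ (n + δ * p) / volume.real (ball (0 : Eucl n) 1)

theorem pointEnergyConst_pos : 0 < pointEnergyConst n δ p :=
  div_pos (by positivity) (volume_real_unitBall_pos n)

/-- Young's inequality with a free threshold `T` keeps the bound linear in the local energy. -/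
theorem meanEDist_dirac_ballLaw_le (hu : Measurable u) (hp : 1 ≤ p) (hδp : 0 ≤ n + δ * p)
    (hT : 0 < T) (hρ : 0 < ρ) (hτball : ball z ρ ⊆ tauBall n τ D y)
    (hball : ball z ρ ⊆ closedBall y (5 * ρ)) :
    meanEDist (Measure.dirac (u y)) (ballLaw u z ρ) ≤ ENNReal.ofReal T
      + ENNReal.ofReal (pointEnergyConst n δ p * (T ^ (1 - p) * ρ ^ (δ * p)))
        * localEnergy n δ τ p D u y := by
  have := isProbabilityMeasure_ballLaw (z := z) hu hρ
  set V := volume (ball z ρ) with hV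
  have hV0 : V ≠ 0 := (measure_ball_pos volume z hρ).ne'
  have hVtop : V ≠ ⊤ := measure_ball_lt_top.ne
  set L := ENNReal.ofReal (T ^ (1 - p) * (5 * ρ) ^ (n + δ * p))
  have hintegral : ∫⁻ x in ball z ρ, edist (u y) (u x)
      ≤ ENNReal.ofReal T * V + L * localEnergy n δ τ p D u y := by
    calc ∫⁻ x in ball z ρ, edist (u y) (u x)
        ≤ ∫⁻ x in ball z ρ, ENNReal.ofReal T + L * fracKernel n δ p u y x :=
          setLIntegral_mono' measurableSet_ball fun x hx =>
            edist_le_ofReal_add_mul_fracKernel hp hδp hT (mem_closedBall'.1 (hball hx))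
      _ = ENNReal.ofReal T * V + L * ∫⁻ x in ball z ρ, fracKernel n δ p u y x := by
          rw [lintegral_add_left measurable_const, lintegral_const_mul' _ _ ENNReal.ofReal_ne_top,
            setLIntegral_const]
      _ ≤ ENNReal.ofReal T * V + L * localEnergy n δ τ p D u y := by
          gcongr
          exact lintegral_mono_set hτball
  have hconst :
      V⁻¹ * L = ENNReal.ofReal (pointEnergyConst n δ p * (T ^ (1 - p) * ρ ^ (δ * p))) := by
    have hω := volume_real_unitBall_pos n
    rw [hV, volume_ball_eq_ofReal z hρ, ← ENNReal.ofReal_inv_of_pos (by positivity),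
      ← ENNReal.ofReal_mul (by positivity), pointEnergyConst, Real.mul_rpow (by norm_num) hρ.le,
      Real.rpow_add hρ]
    congr 1
    field_simp
  rw [meanEDist_dirac_left, lintegral_ballLaw hu measurable_edist_right, ← hconst]
  calc V⁻¹ * ∫⁻ x in ball z ρ, edist (u y) (u x)
      ≤ V⁻¹ * (ENNReal.ofReal T * V + L * localEnergy n δ τ p D u y) := by gcongr
    _ = ENNReal.ofReal T + V⁻¹ * L * localEnergy n δ τ p D u y := by
        rw [mul_add, mul_comm _ V, ENNReal.inv_mul_cancel_left hV0 hVtop, mul_assoc]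

/-- The constant in `AdjacentBalls.meanEDist_ballLaw_le`. -/
noncomputable def ballEnergyConst (n : ℕ) (δ p : ℝ) : ℝ :=
  3 ^ (δ * p) * pointEnergyConst n δ p / volume.real (ball (0 : Eucl n) 1)

theorem ballEnergyConst_pos : 0 < ballEnergyConst n δ p :=
  div_pos (mul_pos (by positivity) pointEnergyConst_pos) (volume_real_unitBall_pos n)

theorem inv_volume_ball_mul_le (hρ : 0 < ρ) (hρ' : 0 ≤ ρ') (hle : ρ' ≤ 3 * ρ) (hδp : 0 ≤ δ * p)
    {s : ℝ} (hs : 0 ≤ s) :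
    (volume (ball z ρ))⁻¹ * ENNReal.ofReal (pointEnergyConst n δ p * (s * ρ' ^ (δ * p)))
      ≤ ENNReal.ofReal (ballEnergyConst n δ p * (s * ρ ^ (δ * p - n))) := by
  have hω := volume_real_unitBall_pos n
  have hK := pointEnergyConst_pos (n := n) (δ := δ) (p := p)
  rw [volume_ball_eq_ofReal z hρ, ← ENNReal.ofReal_inv_of_pos (by positivity),
    ← ENNReal.ofReal_mul (by positivity)]
  refine ENNReal.ofReal_le_ofReal ?_
  calc (volume.real (ball (0 : Eucl n) 1) * ρ ^ (n : ℝ))⁻¹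
        * (pointEnergyConst n δ p * (s * ρ' ^ (δ * p)))
      ≤ (volume.real (ball (0 : Eucl n) 1) * ρ ^ (n : ℝ))⁻¹
        * (pointEnergyConst n δ p * (s * (3 * ρ) ^ (δ * p))) := by gcongr
    _ = ballEnergyConst n δ p * (s * ρ ^ (δ * p - n)) := by
        rw [ballEnergyConst, Real.mul_rpow zero_le_three hρ.le, Real.rpow_sub hρ]
        field_simp

theorem AdjacentBalls.meanEDist_ballLaw_le (h : AdjacentBalls τ D z ρ z' ρ')
    (hne : (frontier D).Nonempty) (hu : Measurable u) (hp : 1 ≤ p) (hδp : 0 ≤ δ * p) (hT : 0 < T) :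
    meanEDist (ballLaw u z ρ) (ballLaw u z' ρ') ≤ ENNReal.ofReal T
      + ENNReal.ofReal (ballEnergyConst n δ p * (T ^ (1 - p) * ρ ^ (δ * p - n)))
        * ∫⁻ y in ball z ρ, localEnergy n δ τ p D u y := by
  have hρ := h.left.radius_pos
  have hρ' := h.right.radius_pos
  have := isProbabilityMeasure_ballLaw (z := z') hu hρ'
  set V := volume (ball z ρ)
  have hV0 : V ≠ 0 := (measure_ball_pos volume z hρ).ne'
  have hVtop : V ≠ ⊤ := measure_ball_lt_top.ne
  set K := ENNReal.ofReal (pointEnergyConst n δ p * (T ^ (1 - p) * ρ' ^ (δ * p)))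
  have hpoint : ∀ y ∈ ball z ρ, ∫⁻ b, edist (u y) b ∂ballLaw u z' ρ'
      ≤ ENNReal.ofReal T + K * localEnergy n δ τ p D u y := fun y hy =>
    (meanEDist_dirac_left (u y) _).symm.trans_le (meanEDist_dirac_ballLaw_le hu hp (by positivity)
      hT hρ' (h.ball_subset_tauBall hne hy) (h.ball_subset_closedBall hy))
  have hconst : V⁻¹ * K
      ≤ ENNReal.ofReal (ballEnergyConst n δ p * (T ^ (1 - p) * ρ ^ (δ * p - n))) :=
    inv_volume_ball_mul_le hρ hρ'.le h.right_le hδp (by positivity)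
  calc meanEDist (ballLaw u z ρ) (ballLaw u z' ρ')
      = V⁻¹ * ∫⁻ y in ball z ρ, ∫⁻ b, edist (u y) b ∂ballLaw u z' ρ' :=
        lintegral_ballLaw hu measurable_edist.lintegral_prod_right'
    _ ≤ V⁻¹ * ∫⁻ y in ball z ρ, ENNReal.ofReal T + K * localEnergy n δ τ p D u y := by
        gcongr V⁻¹ * ?_
        exact setLIntegral_mono' measurableSet_ball hpoint
    _ = ENNReal.ofReal T + V⁻¹ * K * ∫⁻ y in ball z ρ, localEnergy n δ τ p D u y := by
        rw [lintegral_add_left measurable_const, lintegral_const_mul' _ _ ENNReal.ofReal_ne_top,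
          setLIntegral_const, mul_add, mul_comm _ V, ENNReal.inv_mul_cancel_left hV0 hVtop,
          mul_assoc]
    _ ≤ _ := by gcongr

end LocalEnergy

section FarFromBoundary

variable {n : ℕ} {δ κ τ p e r : ℝ} {D : Set (Eucl n)} {u : Eucl n → ℝ}

theorem AdjacentBalls.meanEDist_ballLaw_le_of_energy_le {z z' : Eucl n} {ρ ρ' : ℝ}
    (h : AdjacentBalls τ D z ρ z' ρ') (hD : IsOpen D) (hne : (frontier D).Nonempty)
    (hu : Measurable u) (hp : 1 ≤ p) (hδp : 0 ≤ δ * p) (he : 0 < e)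
    (hE : fracEnergyTau n δ τ p D u ≤ ENNReal.ofReal (e ^ p)) :
    meanEDist (ballLaw u z ρ) (ballLaw u z' ρ')
      ≤ ENNReal.ofReal ((1 + ballEnergyConst n δ p) * (e * ρ ^ (δ - n / p))) := by
  have hρ := h.left.radius_pos
  have hK := ballEnergyConst_pos (n := n) (δ := δ) (p := p)
  have hball : ∫⁻ y in ball z ρ, localEnergy n δ τ p D u y ≤ ENNReal.ofReal (e ^ p) :=
    (lintegral_mono_set (h.left.ball_subset hD)).trans hE
  have hscale : (e * ρ ^ (δ - n / p)) ^ (1 - p) * ρ ^ (δ * p - n) * e ^ p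
      = e * ρ ^ (δ - n / p) := by
    have hexp : (δ - n / p) * (1 - p) + (δ * p - n) = δ - n / p := by
      field_simp
      ring
    rw [Real.mul_rpow he.le (by positivity), ← Real.rpow_mul hρ.le, mul_assoc (e ^ (1 - p)),
      ← Real.rpow_add hρ, hexp, mul_right_comm, ← Real.rpow_add he, sub_add_cancel, Real.rpow_one]
  calc meanEDist (ballLaw u z ρ) (ballLaw u z' ρ')
      ≤ ENNReal.ofReal (e * ρ ^ (δ - n / p)) + ENNReal.ofReal (ballEnergyConst n δ p
          * ((e * ρ ^ (δ - n / p)) ^ (1 - p) * ρ ^ (δ * p - n))) * ENNReal.ofReal (e ^ p) := by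
        refine (h.meanEDist_ballLaw_le hne hu hp hδp (T := e * ρ ^ (δ - n / p))
          (by positivity)).trans ?_
        gcongr
    _ = ENNReal.ofReal ((1 + ballEnergyConst n δ p) * (e * ρ ^ (δ - n / p))) := by
        rw [← ENNReal.ofReal_mul (by positivity), ← ENNReal.ofReal_add (by positivity)
          (by positivity), mul_assoc (ballEnergyConst n δ p), hscale, one_add_mul]

/-- The constant in `IsCarrot.meanEDist_ballLaw_le`. -/
noncomputable def carrotConst (n : ℕ) (δ κ p : ℝ) : ℝ :=
  (1 + ballEnergyConst n δ p) / (1 - (1 + κ) ^ (δ - n / p))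

theorem one_add_ballEnergyConst_add_mul_carrotConst (hκ : 0 < κ) (hα : δ - n / p < 0) :
    1 + ballEnergyConst n δ p + (1 + κ) ^ (δ - n / p) * carrotConst n δ κ p
      = carrotConst n δ κ p := by
  have hlt : (1 + κ) ^ (δ - n / p) < 1 :=
    Real.rpow_lt_one_of_one_lt_of_neg (lt_add_of_pos_right 1 hκ) hα
  have hne : 1 - (1 + κ) ^ (δ - n / p) ≠ 0 := (sub_pos.2 hlt).ne'
  rw [carrotConst]
  field_simp
  ring

theorem carrotConst_pos (hκ : 0 < κ) (hα : δ - n / p < 0) : 0 < carrotConst n δ κ p := by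
  have hK := ballEnergyConst_pos (n := n) (δ := δ) (p := p)
  have hlt : (1 + κ) ^ (δ - n / p) < 1 :=
    Real.rpow_lt_one_of_one_lt_of_neg (lt_add_of_pos_right 1 hκ) hα
  exact div_pos (by positivity) (sub_pos.2 hlt)

theorem one_add_ballEnergyConst_le_carrotConst (hκ : 0 < κ) (hα : δ - n / p < 0) :
    1 + ballEnergyConst n δ p ≤ carrotConst n δ κ p := by
  have hC := carrotConst_pos (n := n) hκ hα
  rw [← one_add_ballEnergyConst_add_mul_carrotConst hκ hα]
  exact le_add_of_nonneg_right (by positivity)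

theorem IsCarrot.meanEDist_ballLaw_le {x : Eucl n} {S : ℝ} {z : ℝ → Eucl n}
    (h : IsCarrot κ τ D x S z) (hD : IsCarrotDomain κ τ D) (hu : Measurable u) (hp : 1 ≤ p)
    (hδp : 0 ≤ δ * p) (hα : δ - n / p < 0) (he : 0 < e)
    (hE : fracEnergyTau n δ τ p D u ≤ ENNReal.ofReal (e ^ p)) (hr : 0 < r) (hrS : r ≤ S) :
    meanEDist (ballLaw u (z r) r) (ballLaw u (z S) S)
      ≤ ENNReal.ofReal (carrotConst n δ κ p * (e * r ^ (δ - n / p))) := by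
  have hκ := hD.ratio_pos
  have hC := carrotConst_pos (n := n) hκ hα
  have hK := ballEnergyConst_pos (n := n) (δ := δ) (p := p)
  have hstep {r ρ : ℝ} (hr : 0 < r) (hle : r ≤ ρ) (hle' : ρ ≤ (1 + κ) * r) (hρ : ρ ≤ S) :
      meanEDist (ballLaw u (z r) r) (ballLaw u (z ρ) ρ)
        ≤ ENNReal.ofReal ((1 + ballEnergyConst n δ p) * (e * r ^ (δ - n / p))) :=
    (h.adjacentBalls hκ hD.ratio_le_one hr hle hle' hρ).meanEDist_ballLaw_le_of_energy_le hD.isOpen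
      hD.frontier_nonempty hu hp hδp he hE
  obtain ⟨J, hJ⟩ := pow_unbounded_of_one_lt (S / r) (lt_add_of_pos_right 1 hκ)
  rw [div_lt_iff₀ hr] at hJ
  induction J generalizing r with
  | zero => exact absurd hrS (by simpa using hJ)
  | succ J ih =>
    rcases le_total S ((1 + κ) * r) with hS | hS
    · refine (hstep hr hrS hS le_rfl).trans (ENNReal.ofReal_le_ofReal ?_)
      gcongr
      exact one_add_ballEnergyConst_le_carrotConst hκ hα
    have hr' : 0 < (1 + κ) * r := by positivity
    have hle : r ≤ (1 + κ) * r := by linarith [mul_pos hκ hr]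
    have := isProbabilityMeasure_ballLaw (z := z r) hu hr
    have := isProbabilityMeasure_ballLaw (z := z ((1 + κ) * r)) hu hr'
    have := isProbabilityMeasure_ballLaw (z := z S) hu (hr.trans_le hrS)
    refine (meanEDist_triangle _ (ballLaw u (z ((1 + κ) * r)) ((1 + κ) * r)) _).trans
      ((add_le_add (hstep hr hle le_rfl hS)
        (ih hr' hS (by rwa [← mul_assoc, ← pow_succ]))).trans_eq ?_)
    rw [← ENNReal.ofReal_add (by positivity) (by positivity), Real.mul_rpow (by positivity) hr.le]
    congr 1
    linear_combination
      (e * r ^ (δ - n / p)) * one_add_ballEnergyConst_add_mul_carrotConst (n := n) hκ hα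

theorem meanEDist_ballLaw_le_of_isCarrot {x w : Eucl n} {S S' ρ ρ' : ℝ} {z z' : ℝ → Eucl n}
    (h : IsCarrot κ τ D x S z) (h' : IsCarrot κ τ D w S' z') (hend : z S = z' S')
    (hS : S ≤ 3 * S') (hS' : S' ≤ 3 * S) (hD : IsCarrotDomain κ τ D) (hu : Measurable u)
    (hp : 1 ≤ p) (hδp : 0 ≤ δ * p) (hα : δ - n / p < 0) (he : 0 < e)
    (hE : fracEnergyTau n δ τ p D u ≤ ENNReal.ofReal (e ^ p)) (hr : 0 < r) (hρ : ρ ∈ Icc r S)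
    (hρ' : ρ' ∈ Icc r S') :
    meanEDist (ballLaw u (z ρ) ρ) (ballLaw u (z' ρ') ρ')
      ≤ ENNReal.ofReal (3 * carrotConst n δ κ p * (e * r ^ (δ - n / p))) := by
  have hκ := hD.ratio_pos
  have hC := carrotConst_pos (n := n) hκ hα
  have hrS := hρ.1.trans hρ.2
  have hrS' := hρ'.1.trans hρ'.2
  have hadj : AdjacentBalls τ D (z S) S (z' S') S' :=
    ⟨h.isWhitneyBall S ⟨hr.trans_le hrS, le_rfl⟩, h'.isWhitneyBall S' ⟨hr.trans_le hrS', le_rfl⟩,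
      by simpa [hend] using (hr.trans_le hrS).le, by simpa [hend] using (hr.trans_le hrS').le,
      hS, hS'⟩
  have hmono {t K : ℝ} (hK : K ≤ carrotConst n δ κ p) (ht : r ≤ t) :
      ENNReal.ofReal (K * (e * t ^ (δ - n / p)))
        ≤ ENNReal.ofReal (carrotConst n δ κ p * (e * r ^ (δ - n / p))) := by
    have ht0 := hr.trans_le ht
    refine ENNReal.ofReal_le_ofReal (mul_le_mul hK ?_ (by positivity) hC.le)
    gcongr ?_ * ?_
    exact Real.rpow_le_rpow_of_nonpos hr ht hα.le
  have := isProbabilityMeasure_ballLaw (z := z ρ) hu (hr.trans_le hρ.1)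
  have := isProbabilityMeasure_ballLaw (z := z' ρ') hu (hr.trans_le hρ'.1)
  have := isProbabilityMeasure_ballLaw (z := z S) hu (hr.trans_le hrS)
  have := isProbabilityMeasure_ballLaw (z := z' S') hu (hr.trans_le hrS')
  have hup := (h.meanEDist_ballLaw_le hD hu hp hδp hα he hE (hr.trans_le hρ.1) hρ.2).trans
    (hmono le_rfl hρ.1)
  have hcross := (hadj.meanEDist_ballLaw_le_of_energy_le hD.isOpen hD.frontier_nonempty hu hp hδp
    he hE).trans (hmono (one_add_ballEnergyConst_le_carrotConst hκ hα) hrS)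
  have hdown := (h'.meanEDist_ballLaw_le hD hu hp hδp hα he hE (hr.trans_le hρ'.1) hρ'.2).trans
    (hmono le_rfl hρ'.1)
  rw [meanEDist_comm] at hdown
  calc meanEDist (ballLaw u (z ρ) ρ) (ballLaw u (z' ρ') ρ')
      ≤ meanEDist (ballLaw u (z ρ) ρ) (ballLaw u (z S) S)
        + meanEDist (ballLaw u (z S) S) (ballLaw u (z' S') S')
        + meanEDist (ballLaw u (z' S') S') (ballLaw u (z' ρ') ρ') :=
        (meanEDist_triangle _ (ballLaw u (z' S') S') _).trans
          (add_le_add_left (meanEDist_triangle _ _ _) _)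
    _ ≤ _ := add_le_add (add_le_add hup hcross) hdown
    _ = _ := by
        rw [← ENNReal.ofReal_add (by positivity) (by positivity),
          ← ENNReal.ofReal_add (by positivity) (by positivity)]
        ring_nf

/-- The points of `D` receding from its boundary. -/
noncomputable def awayFromFrontier (D : Set (Eucl n)) : Filter D :=
  Filter.comap (fun w : D => infDist (w : Eucl n) (frontier D)) Filter.atTop

/-- The values of `u` on the Whitney balls of `D` tend to `a` as the balls recede from the
boundary; this singles out the constant in the Sobolev–Poincaré inequality. -/
def HasValueAtInfinity (κ : ℝ) (D : Set (Eucl n)) (u : Eucl n → ℝ) (a : ℝ) : Prop :=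
  Filter.Tendsto (fun w : D => meanEDist (ballLaw u w (κ * infDist (w : Eucl n) (frontier D)))
    (Measure.dirac a)) (awayFromFrontier D) (nhds 0)

theorem IsCarrotDomain.awayFromFrontier_neBot (hD : IsCarrotDomain κ τ D) :
    (awayFromFrontier D).NeBot := by
  refine Filter.comap_neBot fun s hs => ?_
  obtain ⟨R, hR⟩ := Filter.mem_atTop_sets.1 hs
  obtain ⟨w, hw, hRw⟩ := hD.exists_le_infDist R
  exact ⟨⟨w, hw⟩, hR _ hRw⟩

theorem IsCarrotDomain.eventually_le_mul_infDist (hD : IsCarrotDomain κ τ D) (R : ℝ) :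
    ∀ᶠ w : D in awayFromFrontier D, R ≤ κ * infDist (w : Eucl n) (frontier D) :=
  (Filter.tendsto_comap.const_mul_atTop hD.ratio_pos).eventually_ge_atTop R

theorem IsCarrotDomain.meanEDist_ballLaw_le (hD : IsCarrotDomain κ τ D) (hu : Measurable u)
    (hp : 1 ≤ p) (hδp : 0 ≤ δ * p) (hα : δ - n / p < 0) (he : 0 < e)
    (hE : fracEnergyTau n δ τ p D u ≤ ENNReal.ofReal (e ^ p)) (hr : 0 < r) {w w' : Eucl n}
    (hw : w ∈ D) (hw' : w' ∈ D) (hrw : r ≤ κ * infDist w (frontier D))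
    (hrw' : r ≤ κ * infDist w' (frontier D)) :
    meanEDist (ballLaw u w (κ * infDist w (frontier D)))
        (ballLaw u w' (κ * infDist w' (frontier D)))
      ≤ ENNReal.ofReal (3 * carrotConst n δ κ p * (e * r ^ (δ - n / p))) := by
  obtain ⟨S, S', z, z', h, h', hend, hS, hS'⟩ := hD.exists_carrots w hw w' hw'
  simpa only [h.eq_start _ le_rfl, h'.eq_start _ le_rfl] using
    meanEDist_ballLaw_le_of_isCarrot h h' hend hS hS' hD hu hp hδp hα he hE hr ⟨hrw, h.le_end⟩
      ⟨hrw', h'.le_end⟩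

theorem IsCarrotDomain.exists_hasValueAtInfinity (hD : IsCarrotDomain κ τ D) (hu : Measurable u)
    (hp : 1 ≤ p) (hδp : 0 ≤ δ * p) (hα : δ - n / p < 0)
    (hE : fracEnergyTau n δ τ p D u < ⊤) : ∃ a, HasValueAtInfinity κ D u a := by
  obtain ⟨e, he, hEe⟩ : ∃ e > 0, fracEnergyTau n δ τ p D u ≤ ENNReal.ofReal (e ^ p) := by
    have hpos : 0 < (fracEnergyTau n δ τ p D u).toReal + 1 := by positivity
    refine ⟨_, Real.rpow_pos_of_pos hpos p⁻¹, ?_⟩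
    rw [Real.rpow_inv_rpow hpos.le (by positivity), ← ENNReal.ofReal_toReal hE.ne]
    exact ENNReal.ofReal_le_ofReal (by simp)
  have (w : D) := isProbabilityMeasure_ballLaw (z := w) hu
    (mul_pos hD.ratio_pos (infDist_frontier_pos hD.isOpen hD.frontier_nonempty w.2))
  have := hD.awayFromFrontier_neBot
  have hsmall : Filter.Tendsto (fun r : ℝ => ENNReal.ofReal
      (3 * carrotConst n δ κ p * (e * r ^ (δ - n / p)))) Filter.atTop (nhds 0) := by
    have hpow := tendsto_rpow_neg_atTop (neg_pos.2 hα)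
    simpa using ENNReal.tendsto_ofReal ((hpow.const_mul e).const_mul (3 * carrotConst n δ κ p))
  refine exists_tendsto_meanEDist_dirac fun ε hε => ?_
  obtain ⟨r, hrε, hr⟩ := ((ENNReal.tendsto_nhds_zero.1 hsmall ε hε).and
    (Filter.eventually_gt_atTop 0)).exists
  have hev := hD.eventually_le_mul_infDist r
  obtain ⟨w', hw'⟩ := hev.exists
  exact ⟨w', hev.mono fun w hw =>
    (hD.meanEDist_ballLaw_le hu hp hδp hα he hEe hr w.2 w'.2 hw hw').trans hrε⟩

end FarFromBoundary

section Pointwise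

variable {n : ℕ} {δ κ τ p e r t : ℝ} {D : Set (Eucl n)} {u : Eucl n → ℝ} {x : Eucl n} {a : ℝ}

theorem mul_pow_rpow_mul_div_pow_rpow {L : ℝ} (hL : 0 < L) (ht : 0 < t) (hr : 0 < r) (m : ℝ)
    (j : ℕ) :
    (t * (L ^ (-δ)) ^ j) ^ (1 - p) * (r / L ^ j) ^ (δ * p - m)
      = t ^ (1 - p) * r ^ (δ * p - m) * (L ^ (m - δ)) ^ j := by
  have hexp : -δ * j * (1 - p) - j * (δ * p - m) = (m - δ) * j := by ring
  rw [Real.mul_rpow ht.le (by positivity), Real.div_rpow hr.le (by positivity),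
    ← Real.rpow_mul_natCast hL.le, ← Real.rpow_mul_natCast hL.le, ← Real.rpow_mul hL.le,
    ← Real.rpow_natCast_mul hL.le, ← hexp, Real.rpow_sub hL]
  ring

/-- The energy paid for passing from the `j`-th to the next ball of a chain of balls of radii
`r / (1 + κ) ^ j` descending to `x`, when Young's inequality is applied there with threshold
`t * (1 + κ) ^ (-δ * j)`. -/
noncomputable def stepEnergy (n : ℕ) (δ κ τ p : ℝ) (D : Set (Eucl n)) (u : Eucl n → ℝ) (t r : ℝ)
    (x : Eucl n) (j : ℕ) : ℝ≥0∞ :=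
  ENNReal.ofReal
      (ballEnergyConst n δ p * (t ^ (1 - p) * r ^ (δ * p - n) * ((1 + κ) ^ (n - δ)) ^ j))
    * ∫⁻ y in D ∩ ball x ((1 + κ⁻¹) * (r / (1 + κ) ^ j)), localEnergy n δ τ p D u y

/-- The energy paid for comparing the value of `u` at `x` with its values on a ball of radius `r`
through a chain of balls as in `stepEnergy`, including the passage from the last ball to `x`. -/
noncomputable def chainEnergy (n : ℕ) (δ κ τ p : ℝ) (D : Set (Eucl n)) (u : Eucl n → ℝ) (t r : ℝ)
    (x : Eucl n) : ℝ≥0∞ :=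
  ENNReal.ofReal (pointEnergyConst n δ p * (t ^ (1 - p) * r ^ (δ * p)))
      * localEnergy n δ τ p D u x
    + ∑' j : ℕ, stepEnergy n δ κ τ p D u t r x j

/-- The constant in `IsCarrot.meanEDist_dirac_ballLaw_le`. -/
noncomputable def thresholdConst (δ κ : ℝ) : ℝ := (1 - (1 + κ) ^ (-δ))⁻¹

theorem one_add_rpow_neg_lt_one (hκ : 0 < κ) (hδ : 0 < δ) : (1 + κ) ^ (-δ) < 1 :=
  Real.rpow_lt_one_of_one_lt_of_neg (lt_add_of_pos_right 1 hκ) (neg_lt_zero.2 hδ)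

theorem thresholdConst_pos (hκ : 0 < κ) (hδ : 0 < δ) : 0 < thresholdConst δ κ :=
  inv_pos.2 (sub_pos.2 (one_add_rpow_neg_lt_one hκ hδ))

theorem tsum_ofReal_mul_pow (hκ : 0 < κ) (hδ : 0 < δ) (ht : 0 ≤ t) :
    ∑' j : ℕ, ENNReal.ofReal (t * ((1 + κ) ^ (-δ)) ^ j)
      = ENNReal.ofReal (t * thresholdConst δ κ) := by
  have hν : 0 ≤ (1 + κ) ^ (-δ) := by positivity
  have hν1 := one_add_rpow_neg_lt_one hκ hδ
  rw [← ENNReal.ofReal_tsum_of_nonneg (fun j => by positivity)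
    ((summable_geometric_of_lt_one hν hν1).mul_left t), tsum_mul_left,
    tsum_geometric_of_lt_one hν hν1, thresholdConst]

section Carrot

variable {S : ℝ} {z : ℝ → Eucl n}

theorem IsCarrot.meanEDist_ballLaw_div_le (h : IsCarrot κ τ D x S z) (hD : IsCarrotDomain κ τ D)
    (hu : Measurable u) (hp : 1 ≤ p) (hδ : 0 ≤ δ) (ht : 0 < t) (hr : 0 < r) (hrS : r ≤ S) (j : ℕ) :
    meanEDist (ballLaw u (z (r / (1 + κ) ^ j)) (r / (1 + κ) ^ j))
        (ballLaw u (z (r / (1 + κ) ^ (j + 1))) (r / (1 + κ) ^ (j + 1)))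
      ≤ ENNReal.ofReal (t * ((1 + κ) ^ (-δ)) ^ j) + stepEnergy n δ κ τ p D u t r x j := by
  have hκ := hD.ratio_pos
  have hδp : 0 ≤ δ * p := by positivity
  have hL : 1 ≤ 1 + κ := by linarith
  have hρS (i : ℕ) : r / (1 + κ) ^ i ≤ S := (div_le_self hr.le (one_le_pow₀ hL)).trans hrS
  have hadj : AdjacentBalls τ D (z (r / (1 + κ) ^ j)) (r / (1 + κ) ^ j)
      (z (r / (1 + κ) ^ (j + 1))) (r / (1 + κ) ^ (j + 1)) := by
    refine (h.adjacentBalls hκ hD.ratio_le_one (by positivity) ?_ ?_ (hρS j)).symm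
    · gcongr
      exact j.le_succ
    · rw [pow_succ]
      exact le_of_eq (by field_simp)
  have hsubset : ball (z (r / (1 + κ) ^ j)) (r / (1 + κ) ^ j)
      ⊆ D ∩ ball x ((1 + κ⁻¹) * (r / (1 + κ) ^ j)) :=
    subset_inter (hadj.left.ball_subset hD.isOpen) (h.ball_subset hκ ⟨by positivity, hρS j⟩)
  refine (hadj.meanEDist_ballLaw_le hD.frontier_nonempty hu hp hδp
    (T := t * ((1 + κ) ^ (-δ)) ^ j) (by positivity)).trans ?_
  rw [mul_pow_rpow_mul_div_pow_rpow (by positivity) ht hr, stepEnergy]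
  gcongr

theorem IsCarrot.meanEDist_dirac_ballLaw_div_le (h : IsCarrot κ τ D x S z)
    (hD : IsCarrotDomain κ τ D) (hu : Measurable u) (hp : 1 ≤ p) (hδ : 0 ≤ δ) (ht : 0 < t)
    (hr : 0 < r) {j : ℕ} (hj : r / (1 + κ) ^ j ≤ κ * infDist x (frontier D)) :
    meanEDist (Measure.dirac (u x)) (ballLaw u (z (r / (1 + κ) ^ j)) (r / (1 + κ) ^ j))
      ≤ ENNReal.ofReal (t * ((1 + κ) ^ (-δ)) ^ j)
        + ENNReal.ofReal (pointEnergyConst n δ p * (t ^ (1 - p) * r ^ (δ * p)))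
          * localEnergy n δ τ p D u x := by
  have hκ := hD.ratio_pos
  have hK := pointEnergyConst_pos (n := n) (δ := δ) (p := p)
  have hnδp : 0 ≤ n + δ * p := by positivity
  have hρ : 0 < r / (1 + κ) ^ j := by positivity
  have hball : IsWhitneyBall τ D x (r / (1 + κ) ^ j) := by
    simpa only [h.eq_start _ hj] using h.isWhitneyBall _ ⟨hρ, hj.trans h.le_end⟩
  have hself := hball.adjacentBalls_self
  have hx := mem_ball_self (x := x) hρ
  have hscale := mul_pow_rpow_mul_div_pow_rpow (δ := δ) (p := p) (L := 1 + κ) (by positivity) ht hr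
    0 j
  rw [sub_zero] at hscale
  rw [h.eq_start _ hj]
  refine (meanEDist_dirac_ballLaw_le hu hp hnδp
    (by positivity : 0 < t * ((1 + κ) ^ (-δ)) ^ j) hρ
    (hself.ball_subset_tauBall hD.frontier_nonempty hx) (hself.ball_subset_closedBall hx)).trans ?_
  rw [hscale, zero_sub]
  have hle : ((1 + κ) ^ (-δ)) ^ j ≤ 1 := pow_le_one₀ (by positivity)
    (Real.rpow_le_one_of_one_le_of_nonpos (by linarith) (by linarith))
  gcongr _ + ENNReal.ofReal (_ * ?_) * _
  exact mul_le_of_le_one_right (by positivity) hle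

theorem IsCarrot.meanEDist_dirac_ballLaw_le (h : IsCarrot κ τ D x S z) (hx : x ∈ D)
    (hD : IsCarrotDomain κ τ D) (hu : Measurable u) (hp : 1 ≤ p) (hδ : 0 < δ) (ht : 0 < t)
    (hr : 0 < r) (hrS : r ≤ S) :
    meanEDist (Measure.dirac (u x)) (ballLaw u (z r) r)
      ≤ ENNReal.ofReal (t * thresholdConst δ κ) + chainEnergy n δ κ τ p D u t r x := by
  have hκ := hD.ratio_pos
  set ρ : ℕ → ℝ := fun j => r / (1 + κ) ^ j with hρdef
  set T : ℕ → ℝ≥0∞ := fun j => ENNReal.ofReal (t * ((1 + κ) ^ (-δ)) ^ j)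
  set A := ENNReal.ofReal (pointEnergyConst n δ p * (t ^ (1 - p) * r ^ (δ * p)))
    * localEnergy n δ τ p D u x
  have hρ (j : ℕ) : 0 < ρ j := by positivity
  have (j : ℕ) := isProbabilityMeasure_ballLaw (z := z (ρ j)) hu (hρ j)
  obtain ⟨J, hJ⟩ : ∃ J : ℕ, ρ (J + 1) ≤ κ * infDist x (frontier D) := by
    have hd := mul_pos hκ (infDist_frontier_pos hD.isOpen hD.frontier_nonempty hx)
    obtain ⟨J, hJ⟩ := pow_unbounded_of_one_lt (r / (κ * infDist x (frontier D)))
      (lt_add_of_pos_right 1 hκ)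
    refine ⟨J, ?_⟩
    rw [hρdef, div_le_comm₀ (by positivity) hd]
    exact hJ.le.trans (pow_le_pow_right₀ (by linarith) J.le_succ)
  have hstep (j : ℕ) := h.meanEDist_ballLaw_div_le hD hu hp hδ.le ht hr hrS j
  have hlast := h.meanEDist_dirac_ballLaw_div_le hD hu hp hδ.le ht hr hJ
  have hchain := meanEDist_le_sum_range (fun j => ballLaw u (z (ρ j)) (ρ j)) J
  rw [meanEDist_comm] at hchain
  have hzero : ρ 0 = r := by simp [hρdef]
  rw [← tsum_ofReal_mul_pow hκ hδ ht.le]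
  calc meanEDist (Measure.dirac (u x)) (ballLaw u (z r) r)
      ≤ meanEDist (Measure.dirac (u x)) (ballLaw u (z (ρ (J + 1))) (ρ (J + 1)))
        + meanEDist (ballLaw u (z (ρ (J + 1))) (ρ (J + 1))) (ballLaw u (z (ρ 0)) (ρ 0)) := by
        rw [← hzero]
        exact meanEDist_triangle _ _ _
    _ ≤ T (J + 1) + A + ∑ j ∈ Finset.range (J + 1), (T j + stepEnergy n δ κ τ p D u t r x j) :=
        add_le_add hlast (hchain.trans (Finset.sum_le_sum fun j _ => hstep j))
    _ = ∑ j ∈ Finset.range (J + 1 + 1), T j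
        + (A + ∑ j ∈ Finset.range (J + 1), stepEnergy n δ κ τ p D u t r x j) := by
        rw [Finset.sum_add_distrib, Finset.sum_range_succ _ (J + 1)]
        abel
    _ ≤ ∑' j, T j + chainEnergy n δ κ τ p D u t r x := by
        unfold chainEnergy
        gcongr <;> exact ENNReal.sum_le_tsum _

end Carrot

theorem HasValueAtInfinity.edist_le (ha : HasValueAtInfinity κ D u a) (hD : IsCarrotDomain κ τ D)
    (hu : Measurable u) (hp : 1 ≤ p) (hδ : 0 < δ) (hα : δ - n / p < 0) (he : 0 < e)
    (hE : fracEnergyTau n δ τ p D u ≤ ENNReal.ofReal (e ^ p)) (hr : 0 < r) (hx : x ∈ D) :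
    edist (u x) a
      ≤ ENNReal.ofReal ((thresholdConst δ κ + 3 * carrotConst n δ κ p) * (e * r ^ (δ - n / p)))
        + chainEnergy n δ κ τ p D u (e * r ^ (δ - n / p)) r x := by
  have hκ := hD.ratio_pos
  have hC := carrotConst_pos (n := n) hκ hα
  have hC' := thresholdConst_pos hκ hδ
  have hδp : 0 ≤ δ * p := by positivity
  have := hD.awayFromFrontier_neBot
  set t := e * r ^ (δ - n / p)
  have ht : 0 < t := by positivity
  rw [HasValueAtInfinity] at ha
  refine le_of_tendsto_of_tendsto tendsto_const_nhds
    (by simpa only [add_zero] using tendsto_const_nhds.add ha)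
    ((hD.eventually_le_mul_infDist (3 * r)).mono fun w hw => ?_)
  obtain ⟨S, S', z, z', h, h', hend, hS, hS'⟩ := hD.exists_carrots x hx w w.2
  have hrS : r ≤ S := by linarith [h'.le_end]
  have hx_le := h.meanEDist_dirac_ballLaw_le hx hD hu hp hδ ht hr hrS
  have hw_le := meanEDist_ballLaw_le_of_isCarrot h h' hend hS hS' hD hu hp hδp hα he hE hr
    ⟨le_rfl, hrS⟩ ⟨by linarith, h'.le_end⟩
  rw [h'.eq_start _ le_rfl] at hw_le
  have := isProbabilityMeasure_ballLaw (z := z r) hu hr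
  have := isProbabilityMeasure_ballLaw (z := w) hu ((by positivity : 0 < 3 * r).trans_le hw)
  rw [← meanEDist_dirac_dirac, add_mul, ENNReal.ofReal_add (by positivity) (by positivity),
    mul_comm (thresholdConst δ κ), add_right_comm (ENNReal.ofReal _)]
  exact (meanEDist_triangle _ _ _).trans (add_le_add_left
    ((meanEDist_triangle _ _ _).trans (add_le_add hx_le hw_le)) _)

/-- The constant in `lintegral_chainEnergy_le`. -/
noncomputable def chainConst (n : ℕ) (δ κ p : ℝ) : ℝ :=
  pointEnergyConst n δ p
    + ballEnergyConst n δ p * (volume.real (ball (0 : Eucl n) 1) * (1 + κ⁻¹) ^ (n : ℝ))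
      * thresholdConst δ κ

theorem chainConst_pos (hκ : 0 < κ) (hδ : 0 < δ) : 0 < chainConst n δ κ p := by
  have := pointEnergyConst_pos (n := n) (δ := δ) (p := p)
  have := ballEnergyConst_pos (n := n) (δ := δ) (p := p)
  have := volume_real_unitBall_pos n
  have := thresholdConst_pos hκ hδ
  unfold chainConst
  positivity

theorem measurable_stepEnergy (hu : Measurable u) (j : ℕ) :
    Measurable fun x => stepEnergy n δ κ τ p D u t r x j :=
  (measurable_setLIntegral_inter_ball volume D (measurable_localEnergy hu) _).const_mul _

theorem measurable_chainEnergy (hu : Measurable u) :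
    Measurable (chainEnergy n δ κ τ p D u t r) :=
  ((measurable_localEnergy hu).const_mul _).add
    (Measurable.tsum fun j => measurable_stepEnergy hu j)

theorem lintegral_stepEnergy_le (hu : Measurable u) (hκ : 0 < κ) (ht : 0 < t) (hr : 0 < r) (j : ℕ) :
    ∫⁻ x in D, stepEnergy n δ κ τ p D u t r x j
      ≤ ENNReal.ofReal (ballEnergyConst n δ p
          * (volume.real (ball (0 : Eucl n) 1) * (1 + κ⁻¹) ^ (n : ℝ)) * (t ^ (1 - p) * r ^ (δ * p))
          * ((1 + κ) ^ (-δ)) ^ j) * fracEnergyTau n δ τ p D u := by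
  have hK := ballEnergyConst_pos (n := n) (δ := δ) (p := p)
  have hL : 0 < 1 + κ := by positivity
  have hfubini := lintegral_setLIntegral_inter_ball_le volume D
    (measurable_localEnergy (n := n) (δ := δ) (τ := τ) (p := p) (D := D) hu)
    ((1 + κ⁻¹) * (r / (1 + κ) ^ j))
  have hpow : ((1 + κ) ^ (n - δ)) ^ j * (((1 + κ) ^ j) ^ (n : ℝ))⁻¹ = ((1 + κ) ^ (-δ)) ^ j := by
    rw [← Real.rpow_natCast_mul hL.le, mul_comm (j : ℝ), Real.rpow_mul_natCast hL.le, ← inv_pow,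
      ← mul_pow, ← Real.rpow_neg hL.le, ← Real.rpow_add hL]
    ring_nf
  unfold stepEnergy
  rw [lintegral_const_mul' _ _ ENNReal.ofReal_ne_top, fracEnergyTau_eq_lintegral_localEnergy]
  refine (mul_le_mul_right hfubini _).trans_eq ?_
  rw [← mul_assoc, volume_ball_eq_ofReal 0 (by positivity), ← ENNReal.ofReal_mul (by positivity),
    Real.mul_rpow (by positivity) (by positivity), Real.div_rpow hr.le (by positivity),
    Real.rpow_sub hr, ← hpow]
  congr 2
  field_simp

theorem lintegral_chainEnergy_le (hu : Measurable u) (hκ : 0 < κ) (hδ : 0 < δ) (ht : 0 < t)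
    (hr : 0 < r) :
    ∫⁻ x in D, chainEnergy n δ κ τ p D u t r x
      ≤ ENNReal.ofReal (chainConst n δ κ p * (t ^ (1 - p) * r ^ (δ * p)))
        * fracEnergyTau n δ τ p D u := by
  have hP := pointEnergyConst_pos (n := n) (δ := δ) (p := p)
  have hK := ballEnergyConst_pos (n := n) (δ := δ) (p := p)
  have hω := volume_real_unitBall_pos n
  have hC := thresholdConst_pos hκ hδ
  unfold chainEnergy
  rw [lintegral_add_left ((measurable_localEnergy hu).const_mul _),
    lintegral_const_mul' _ _ ENNReal.ofReal_ne_top, ← fracEnergyTau_eq_lintegral_localEnergy,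
    lintegral_tsum fun j => (measurable_stepEnergy hu j).aemeasurable, chainConst, add_mul,
    ENNReal.ofReal_add (by positivity) (by positivity), add_mul]
  gcongr
  refine (ENNReal.tsum_le_tsum (lintegral_stepEnergy_le hu hκ ht hr)).trans_eq ?_
  rw [ENNReal.tsum_mul_right, tsum_ofReal_mul_pow hκ hδ (by positivity),
    mul_right_comm _ (t ^ (1 - p) * r ^ (δ * p))]

end Pointwise

section WeakType

variable {n : ℕ} {δ κ τ p e r s : ℝ} {D : Set (Eucl n)} {u : Eucl n → ℝ} {a : ℝ}

/-- The multiple of the natural scale `e * r ^ (δ - n / p)` above which the level sets of `u - a`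
are controlled; see `HasValueAtInfinity.volume_le`. -/
noncomputable def levelConst (n : ℕ) (δ κ p : ℝ) : ℝ :=
  thresholdConst δ κ + 3 * carrotConst n δ κ p + 1

theorem levelConst_pos (hκ : 0 < κ) (hδ : 0 < δ) (hα : δ - n / p < 0) :
    0 < levelConst n δ κ p := by
  have := thresholdConst_pos hκ hδ
  have := carrotConst_pos (n := n) hκ hα
  unfold levelConst
  positivity

theorem HasValueAtInfinity.ofReal_le_chainEnergy (ha : HasValueAtInfinity κ D u a)
    (hD : IsCarrotDomain κ τ D) (hu : Measurable u) (hp : 1 ≤ p) (hδ : 0 < δ)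
    (hα : δ - n / p < 0) (he : 0 < e) (hE : fracEnergyTau n δ τ p D u ≤ ENNReal.ofReal (e ^ p))
    (hr : 0 < r) {x : Eucl n} (hx : x ∈ D)
    (hlevel : levelConst n δ κ p * (e * r ^ (δ - n / p)) ≤ |u x - a|) :
    ENNReal.ofReal (e * r ^ (δ - n / p))
      ≤ chainEnergy n δ κ τ p D u (e * r ^ (δ - n / p)) r x := by
  have hC := carrotConst_pos (n := n) hD.ratio_pos hα
  have hC' := thresholdConst_pos hD.ratio_pos hδ
  refine (ENNReal.add_le_add_iff_left (ENNReal.ofReal_ne_top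
    (r := (thresholdConst δ κ + 3 * carrotConst n δ κ p) * (e * r ^ (δ - n / p))))).1 ?_
  refine le_trans ?_ (ha.edist_le hD hu hp hδ hα he hE hr hx)
  rw [← ENNReal.ofReal_add (by positivity) (by positivity), edist_dist, Real.dist_eq, ← add_one_mul]
  exact ENNReal.ofReal_le_ofReal hlevel

theorem HasValueAtInfinity.volume_le (ha : HasValueAtInfinity κ D u a)
    (hD : IsCarrotDomain κ τ D) (hu : Measurable u) (hp : 1 ≤ p) (hδ : 0 < δ)
    (hα : δ - n / p < 0) (he : 0 < e) (hE : fracEnergyTau n δ τ p D u ≤ ENNReal.ofReal (e ^ p))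
    (hr : 0 < r) :
    volume.restrict D {x | levelConst n δ κ p * (e * r ^ (δ - n / p)) ≤ |u x - a|}
      ≤ ENNReal.ofReal (chainConst n δ κ p * r ^ (n : ℝ)) := by
  set t := e * r ^ (δ - n / p) with ht_def
  have ht : 0 < t := by positivity
  have hK := chainConst_pos (n := n) (p := p) hD.ratio_pos hδ
  have hlevel : ∀ᵐ x ∂volume.restrict D, levelConst n δ κ p * t ≤ |u x - a| →
      ENNReal.ofReal t ≤ chainEnergy n δ κ τ p D u t r x :=
    (ae_restrict_mem hD.isOpen.measurableSet).mono fun x hx hlevel =>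
      ha.ofReal_le_chainEnergy hD hu hp hδ hα he hE hr hx hlevel
  have hscale : t ^ (1 - p) * r ^ (δ * p) * e ^ p = t * r ^ (n : ℝ) := by
    have hexp : (δ - n / p) * p + n = δ * p := by field_simp; ring
    have htp : t ^ p * r ^ (n : ℝ) = e ^ p * r ^ (δ * p) := by
      rw [ht_def, Real.mul_rpow he.le (by positivity), ← Real.rpow_mul hr.le, mul_assoc,
        ← Real.rpow_add hr, hexp]
    rw [Real.rpow_sub ht, Real.rpow_one, mul_assoc, mul_comm (r ^ (δ * p)), ← htp]
    field_simp
  refine (measure_mono_ae hlevel).trans ?_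
  rw [← ENNReal.mul_le_mul_iff_right (ENNReal.ofReal_pos.2 ht).ne' ENNReal.ofReal_ne_top]
  calc ENNReal.ofReal t * volume.restrict D {x | ENNReal.ofReal t ≤ chainEnergy n δ κ τ p D u t r x}
      ≤ ∫⁻ x in D, chainEnergy n δ κ τ p D u t r x :=
        mul_meas_ge_le_lintegral (measurable_chainEnergy hu) _
    _ ≤ ENNReal.ofReal (chainConst n δ κ p * (t ^ (1 - p) * r ^ (δ * p)))
        * ENNReal.ofReal (e ^ p) := by
        grw [lintegral_chainEnergy_le hu hD.ratio_pos hδ ht hr, hE]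
    _ = ENNReal.ofReal t * ENNReal.ofReal (chainConst n δ κ p * r ^ (n : ℝ)) := by
        rw [← ENNReal.ofReal_mul (by positivity), ← ENNReal.ofReal_mul ht.le, mul_assoc, hscale]
        ring_nf

/-- The constant in the weak-type inequality `HasValueAtInfinity.rpow_mul_volume_le`. -/
noncomputable def weakTypeConst (n : ℕ) (δ κ p : ℝ) : ℝ :=
  chainConst n δ κ p * levelConst n δ κ p ^ (n * p / (n - δ * p))

theorem weakTypeConst_pos (hκ : 0 < κ) (hδ : 0 < δ) (hα : δ - n / p < 0) :
    0 < weakTypeConst n δ κ p :=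
  mul_pos (chainConst_pos hκ hδ) (Real.rpow_pos_of_pos (levelConst_pos hκ hδ hα) _)

theorem HasValueAtInfinity.rpow_mul_volume_le_of_energy_le (ha : HasValueAtInfinity κ D u a)
    (hD : IsCarrotDomain κ τ D) (hu : Measurable u) (hp : 1 ≤ p) (hδ : 0 < δ)
    (hα : δ - n / p < 0) (he : 0 < e) (hE : fracEnergyTau n δ τ p D u ≤ ENNReal.ofReal (e ^ p))
    (hs : 0 < s) :
    ENNReal.ofReal (s ^ (n * p / (n - δ * p))) * volume.restrict D {x | s ≤ |u x - a|}
      ≤ ENNReal.ofReal (weakTypeConst n δ κ p * e ^ (n * p / (n - δ * p))) := by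
  set q := n * p / (n - δ * p) with hq
  have hA := levelConst_pos (n := n) hD.ratio_pos hδ hα
  set r := (s / (levelConst n δ κ p * e)) ^ (δ - n / p)⁻¹ with hr_def
  have hr : 0 < r := by positivity
  have hlevel : levelConst n δ κ p * (e * r ^ (δ - n / p)) = s := by
    rw [hr_def, ← Real.rpow_mul (by positivity), inv_mul_cancel₀ hα.ne, Real.rpow_one]
    field_simp
  have hvol : s ^ q * r ^ (n : ℝ) = (levelConst n δ κ p * e) ^ q := by
    have hexp : (δ - n / p)⁻¹ * n = -q := by
      rw [hq, ← neg_sub, inv_neg, neg_mul, neg_inj]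
      field_simp
    rw [hr_def, ← Real.rpow_mul (by positivity), hexp, Real.rpow_neg (by positivity),
      Real.div_rpow hs.le (by positivity)]
    field_simp
  have hmeas := ha.volume_le hD hu hp hδ hα he hE hr
  rw [hlevel] at hmeas
  grw [hmeas]
  rw [← ENNReal.ofReal_mul (by positivity), mul_left_comm, hvol, weakTypeConst,
    Real.mul_rpow hA.le he.le, mul_assoc]

theorem HasValueAtInfinity.rpow_mul_volume_le (ha : HasValueAtInfinity κ D u a)
    (hD : IsCarrotDomain κ τ D) (hu : Measurable u) (hp : 1 ≤ p) (hδ : 0 < δ) (hpn : δ * p < n)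
    (hE : fracEnergyTau n δ τ p D u < ⊤) (hs : 0 < s) :
    ENNReal.ofReal (s ^ (n * p / (n - δ * p))) * volume.restrict D {x | s ≤ |u x - a|}
      ≤ ENNReal.ofReal (weakTypeConst n δ κ p)
        * fracEnergyTau n δ τ p D u ^ (n / (n - δ * p)) := by
  have hp0 : 0 < p := by positivity
  have hα : δ - n / p < 0 := sub_neg.2 ((lt_div_iff₀ hp0).2 hpn)
  have hW := weakTypeConst_pos hD.ratio_pos hδ hα
  set E := fracEnergyTau n δ τ p D u
  set e₀ := E.toReal ^ p⁻¹
  have hE_le {e : ℝ} (he : e₀ < e) : E ≤ ENNReal.ofReal (e ^ p) := by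
    rw [← ENNReal.ofReal_toReal hE.ne]
    refine ENNReal.ofReal_le_ofReal ?_
    rw [← Real.rpow_inv_rpow ENNReal.toReal_nonneg hp0.ne']
    exact Real.rpow_le_rpow (by positivity) he.le hp0.le
  have hlim : Filter.Tendsto
      (fun e => ENNReal.ofReal (weakTypeConst n δ κ p * e ^ (n * p / (n - δ * p))))
      (nhdsWithin e₀ (Ioi e₀))
      (nhds (ENNReal.ofReal (weakTypeConst n δ κ p * e₀ ^ (n * p / (n - δ * p))))) :=
    (ENNReal.continuous_ofReal.comp ((Real.continuous_rpow_const (by positivity)).const_mul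
      _)).continuousWithinAt
  have hweak := ge_of_tendsto hlim (eventually_nhdsWithin_of_forall fun e he =>
    ha.rpow_mul_volume_le_of_energy_le hD hu hp hδ hα
      ((by positivity : 0 ≤ e₀).trans_lt he) (hE_le he) hs)
  have he₀ : e₀ ^ (n * p / (n - δ * p)) = E.toReal ^ (n / (n - δ * p)) := by
    rw [← Real.rpow_mul ENNReal.toReal_nonneg]
    congr 1
    field_simp
  rwa [he₀, ENNReal.ofReal_mul hW.le, ← ENNReal.ofReal_rpow_of_nonneg ENNReal.toReal_nonneg
    (by positivity), ENNReal.ofReal_toReal hE.ne] at hweak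

end WeakType

section Truncation

variable {n : ℕ} {δ κ τ p : ℝ} {D : Set (Eucl n)} {u : Eucl n → ℝ} {a : ℝ}

theorem HasValueAtInfinity.comp (ha : HasValueAtInfinity κ D u a) (hu : Measurable u) {φ : ℝ → ℝ}
    (hφ : LipschitzWith 1 φ) : HasValueAtInfinity κ D (φ ∘ u) (φ a) := by
  have hφm := hφ.continuous.measurable
  refine tendsto_of_tendsto_of_tendsto_of_le_of_le tendsto_const_nhds ha (fun _ => zero_le)
    fun w => ?_
  rw [ballLaw, ← Measure.map_map hφm hu, ← Measure.map_dirac' hφm]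
  exact meanEDist_map_le hφ hφm _ _

theorem fracKernel_eq_edist_rpow_mul (hp : 0 ≤ p) (u : Eucl n → ℝ) (x y : Eucl n) :
    fracKernel n δ p u x y
      = edist (u x) (u y) ^ p * ENNReal.ofReal ((dist x y ^ (n + δ * p))⁻¹) := by
  rw [fracKernel, div_eq_mul_inv, ENNReal.ofReal_mul (by positivity),
    ← ENNReal.ofReal_rpow_of_nonneg (abs_nonneg _) hp, edist_dist, Real.dist_eq]

section Comp

variable {ι : Type*} {φ : ι → ℝ → ℝ}

theorem tsum_fracKernel_comp_le (hp : 1 ≤ p)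
    (hφ : ∀ s t, ∑' i, edist (φ i s) (φ i t) ≤ edist s t) (u : Eucl n → ℝ) (x y : Eucl n) :
    ∑' i, fracKernel n δ p (φ i ∘ u) x y ≤ fracKernel n δ p u x y := by
  have hp0 : 0 ≤ p := by positivity
  simp only [fracKernel_eq_edist_rpow_mul hp0, ENNReal.tsum_mul_right, Function.comp_apply]
  grw [tsum_rpow_le_rpow_tsum _ hp, hφ]

theorem tsum_fracEnergyTau_comp_le [Countable ι] (hp : 1 ≤ p)
    (hφ : ∀ s t, ∑' i, edist (φ i s) (φ i t) ≤ edist s t) (hφm : ∀ i, Measurable (φ i))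
    (hu : Measurable u) :
    ∑' i, fracEnergyTau n δ τ p D (φ i ∘ u) ≤ fracEnergyTau n δ τ p D u := by
  have hcomp (i : ι) : Measurable (φ i ∘ u) := (hφm i).comp hu
  have hkernel (x : Eucl n) (i : ι) : Measurable (fracKernel n δ p (φ i ∘ u) x) :=
    (measurable_fracKernel (hcomp i)).of_uncurry_left
  calc ∑' i, fracEnergyTau n δ τ p D (φ i ∘ u)
      = ∫⁻ x in D, ∑' i, localEnergy n δ τ p D (φ i ∘ u) x :=
        (lintegral_tsum fun i => (measurable_localEnergy (hcomp i)).aemeasurable).symm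
    _ = ∫⁻ x in D, ∫⁻ y in tauBall n τ D x, ∑' i, fracKernel n δ p (φ i ∘ u) x y :=
        lintegral_congr fun x => (lintegral_tsum fun i => (hkernel x i).aemeasurable).symm
    _ ≤ fracEnergyTau n δ τ p D u :=
        lintegral_mono fun x => lintegral_mono fun y => tsum_fracKernel_comp_le hp hφ u x y

end Comp

/-- The part of the distance `|y - a|` lying in the dyadic interval `[2 ^ k, 2 ^ (k + 1)]`, shifted
by `2 ^ k`. -/
noncomputable def dyadicTrunc (a : ℝ) (k : ℤ) (y : ℝ) : ℝ := clamp (2 ^ k) (2 ^ (k + 1)) |y - a|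

theorem lipschitzWith_dyadicTrunc (a : ℝ) (k : ℤ) : LipschitzWith 1 (dyadicTrunc a k) := by
  simpa only [one_mul] using! (lipschitzWith_clamp _ _).comp (LipschitzWith.dist_left a)

theorem tsum_edist_dyadicTrunc_le (a x y : ℝ) :
    ∑' k, edist (dyadicTrunc a k x) (dyadicTrunc a k y) ≤ edist x y :=
  (tsum_edist_clamp_le (zpow_right_mono₀ one_le_two) _ _).trans
    (by simpa using! LipschitzWith.dist_left a x y)

theorem le_abs_dyadicTrunc_sub {k : ℤ} {y : ℝ} (hy : 2 ^ (k + 1) ≤ |y - a|) :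
    2 ^ k ≤ |dyadicTrunc a k y - dyadicTrunc a k a| := by
  have hk : (0 : ℝ) < 2 ^ k := by positivity
  have hk1 : (2 : ℝ) ^ (k + 1) = 2 * 2 ^ k := by rw [zpow_add_one₀ two_ne_zero, mul_comm]
  have hle : (2 : ℝ) ^ k ≤ 2 ^ (k + 1) := by linarith
  have hy' : dyadicTrunc a k y = 2 ^ (k + 1) := by
    rw [dyadicTrunc, clamp, min_eq_left hy, max_eq_right hle]
  have ha : dyadicTrunc a k a = 2 ^ k := by simp [dyadicTrunc, clamp, hk.le]
  rw [hy', ha, hk1]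
  exact (le_of_eq (by ring)).trans (le_abs_self _)

end Truncation

section SobolevPoincare

variable {n : ℕ} {δ κ τ p : ℝ} {D : Set (Eucl n)} {u : Eucl n → ℝ} {a : ℝ}

theorem HasValueAtInfinity.rpow_mul_volume_dyadic_le (ha : HasValueAtInfinity κ D u a)
    (hD : IsCarrotDomain κ τ D) (hu : Measurable u) (hp : 1 ≤ p) (hδ : 0 < δ) (hpn : δ * p < n)
    {k : ℤ} (hE : fracEnergyTau n δ τ p D (dyadicTrunc a k ∘ u) < ⊤) :
    ENNReal.ofReal ((2 ^ k) ^ (n * p / (n - δ * p)))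
        * volume.restrict D {x | 2 ^ (k + 1) ≤ |u x - a|}
      ≤ ENNReal.ofReal (weakTypeConst n δ κ p)
        * fracEnergyTau n δ τ p D (dyadicTrunc a k ∘ u) ^ (n / (n - δ * p)) := by
  have hφ := lipschitzWith_dyadicTrunc a k
  refine le_trans ?_ ((ha.comp hu hφ).rpow_mul_volume_le hD (hφ.continuous.measurable.comp hu) hp
    hδ hpn hE (s := 2 ^ k) (by positivity))
  gcongr _ * ?_
  exact measure_mono fun x hx => le_abs_dyadicTrunc_sub hx

theorem HasValueAtInfinity.lintegral_abs_sub_rpow_le (ha : HasValueAtInfinity κ D u a)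
    (hD : IsCarrotDomain κ τ D) (hu : Measurable u) (hp : 1 ≤ p) (hδ : 0 < δ) (hpn : δ * p < n)
    (hE : fracEnergyTau n δ τ p D u < ⊤) :
    ∫⁻ x in D, ENNReal.ofReal (|u x - a| ^ (n * p / (n - δ * p)))
      ≤ ENNReal.ofReal (4 ^ (n * p / (n - δ * p)) * weakTypeConst n δ κ p)
        * fracEnergyTau n δ τ p D u ^ (n / (n - δ * p)) := by
  have hnp : 0 < n - δ * p := sub_pos.2 hpn
  set q := n * p / (n - δ * p)
  set s := n / (n - δ * p)
  have hδp : 0 < δ * p := by positivity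
  have hn : 0 < (n : ℝ) := hδp.trans hpn
  have hs : 1 ≤ s := (one_le_div hnp).2 (by linarith)
  set E : ℤ → ℝ≥0∞ := fun k => fracEnergyTau n δ τ p D (dyadicTrunc a k ∘ u)
  have hsum : ∑' k, E k ≤ fracEnergyTau n δ τ p D u :=
    tsum_fracEnergyTau_comp_le hp (tsum_edist_dyadicTrunc_le a)
      (fun k => (lipschitzWith_dyadicTrunc a k).continuous.measurable) hu
  have hshell (k : ℤ) : ENNReal.ofReal ((2 ^ (k + 1 + 1)) ^ q)
        * volume.restrict D {x | 2 ^ (k + 1) ≤ |u x - a|}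
      ≤ ENNReal.ofReal (4 ^ q * weakTypeConst n δ κ p) * E k ^ s := by
    have hfour : (2 : ℝ) ^ (k + 1 + 1) = 4 * 2 ^ k := by
      rw [zpow_add_one₀ two_ne_zero, zpow_add_one₀ two_ne_zero]
      ring
    rw [hfour, Real.mul_rpow (by positivity) (by positivity), ENNReal.ofReal_mul (by positivity),
      ENNReal.ofReal_mul (by positivity), mul_assoc, mul_assoc]
    gcongr _ * ?_
    exact ha.rpow_mul_volume_dyadic_le hD hu hp hδ hpn
      (((ENNReal.le_tsum k).trans hsum).trans_lt hE)
  calc ∫⁻ x in D, ENNReal.ofReal (|u x - a| ^ q)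
      ≤ ∑' k : ℤ, ENNReal.ofReal ((2 ^ (k + 1)) ^ q)
          * volume.restrict D {x | 2 ^ k ≤ |u x - a|} :=
        lintegral_abs_rpow_le_tsum (hu.sub_const a) (by positivity)
    _ = ∑' k : ℤ, ENNReal.ofReal ((2 ^ (k + 1 + 1)) ^ q)
          * volume.restrict D {x | 2 ^ (k + 1) ≤ |u x - a|} :=
        ((Equiv.addRight (1 : ℤ)).tsum_eq _).symm
    _ ≤ ∑' k, ENNReal.ofReal (4 ^ q * weakTypeConst n δ κ p) * E k ^ s :=
        ENNReal.tsum_le_tsum hshell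
    _ ≤ ENNReal.ofReal (4 ^ q * weakTypeConst n δ κ p) * fracEnergyTau n δ τ p D u ^ s := by
        rw [ENNReal.tsum_mul_left]
        grw [tsum_rpow_le_rpow_tsum _ hs, hsum]

theorem statement1_general {n : ℕ} {c τ δ p : ℝ} (hc : 0 < c) (hτ : 0 < τ) (hδ : 0 < δ)
    (hp : 1 ≤ p) (hpn : p < n / δ) :
    ∃ C : ℝ, 0 < C ∧
      ∀ D : Set (Eucl n), IsJohnDomain n c D → ¬ Bornology.IsBounded D →
        ∀ u : Eucl n → ℝ, Measurable u → fracEnergyTau n δ τ p D u < ⊤ →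
          (⨅ a : ℝ, ∫⁻ x in D, ENNReal.ofReal (|u x - a| ^ (n * p / (n - δ * p))))
            ≤ ENNReal.ofReal C * fracEnergyTau n δ τ p D u ^ (n / (n - δ * p)) := by
  rw [lt_div_iff₀' hδ] at hpn
  have hp0 : 0 < p := by positivity
  have hα : δ - n / p < 0 := sub_neg.2 ((lt_div_iff₀ hp0).2 hpn)
  have hW := weakTypeConst_pos (carrotRatio_pos hc hτ) hδ hα
  refine ⟨4 ^ (n * p / (n - δ * p)) * weakTypeConst n δ (carrotRatio c τ) p, by positivity,
    fun D hD hb u hu hE => ?_⟩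
  have hcarrot := hD.isCarrotDomain hc hτ hb
  obtain ⟨a, ha⟩ := hcarrot.exists_hasValueAtInfinity hu hp (by positivity) hα hE
  exact iInf_le_of_le a (ha.lintegral_abs_sub_rpow_le hcarrot hu hp hδ hpn hE)

end SobolevPoincare

/-- Fractional Sobolev–Poincaré inequality in unbounded John domains:
for an unbounded `c`-John domain `D ⊆ ℝⁿ`, `n ≥ 2`, `τ, δ ∈ (0,1)`, `1 ≤ p < n/δ`,
there is `C = C(δ,τ,p,n,c) > 0` with
`inf_a ∫_D |u - a|^{np/(n-δp)} ≤ C (|u|_{W^{δ,p}_τ(D)}^p)^{n/(n-δp)}`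
for every `u` in the homogeneous fractional Sobolev space `Ẇ^{δ,p}_τ(D)`. -/
theorem statement1 (n : ℕ) (hn : 2 ≤ n) (c : ℝ) (hc : 1 ≤ c)
    (τ δ p : ℝ) (hτ : τ ∈ Ioo (0:ℝ) 1) (hδ : δ ∈ Ioo (0:ℝ) 1)
    (hp : 1 ≤ p) (hpn : p < n / δ) :
    ∃ C : ℝ, 0 < C ∧
      ∀ D : Set (Eucl n), IsJohnDomain n c D → ¬ Bornology.IsBounded D →
        ∀ u : Eucl n → ℝ, Measurable u → fracEnergyTau n δ τ p D u < ⊤ →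
          (⨅ a : ℝ, ∫⁻ x in D, ENNReal.ofReal
              (|u x - a| ^ ((n:ℝ) * p / ((n:ℝ) - δ * p))) ∂volume)
            ≤ ENNReal.ofReal C * fracEnergyTau n δ τ p D u ^ ((n:ℝ) / ((n:ℝ) - δ * p)) :=
  statement1_general (zero_lt_one.trans_le hc) hτ.1 hδ.1 hp hpn
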